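/- arXiv:2301.02155 — 2 statements merged into one kernel-verified Lean document; each statement's English description precedes it below -/
import Mathlib

section
/- For every integer t ≥ 1, every (ᾱ, β̄) ∈ R^{(t)}_in, and every ε > 0, for all sufficiently large L there exists an (L, L(ᾱ+ε), L(ᾱ+ε), L(β̄+ε), L(β̄+ε)) ε-error (2,2) PIR code whose query distribution for message 1 is uniform on {(1,1),(2,2)} and for message 2 is uniform on {(1,2),(2,1)}. -/
open scoped BigOperators

namespace PIR

/-- Messages are length-`L` vectors over `F_2`. -/
abbrev Msg (L : ℕ) := Fin L → ZMod 2

/-- A (2,2) PIR code (without the correctness condition) with message length `L`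
and query alphabet `Q`.  The two messages are independent and uniform on `F_2^L`;
the queries are independent of the messages (built into the model: the query
distribution `P k` for desired message `k` does not depend on the messages). -/
structure CodeBase (L : ℕ) (Q : Type) [Fintype Q] [DecidableEq Q] where
  /-- query distribution for desired message index `k` -/
  P : Fin 2 → Q × Q → ℝ
  P_nonneg : ∀ k qq, 0 ≤ P k qq
  P_sum : ∀ k, ∑ qq : Q × Q, P k qq = 1
  /-- number of stored `F_2` symbols at database `n` -/
  stor : Fin 2 → ℕ
  /-- storage encoders -/
  phi : (n : Fin 2) → Msg L × Msg L → (Fin (stor n) → ZMod 2)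
  /-- answer lengths -/
  blen : Fin 2 → Q → ℕ
  /-- deterministic answer functions -/
  ans : (n : Fin 2) → (q : Q) → (Fin (stor n) → ZMod 2) → (Fin (blen n q) → ZMod 2)
  /-- decoding functions -/
  dec : (k : Fin 2) → (q₁ q₂ : Q) → (Fin (blen 0 q₁) → ZMod 2) →
      (Fin (blen 1 q₂) → ZMod 2) → Msg L
  /-- Privacy: for each database `n`, the joint distribution of
  `(Q_n^{[k]}, A_n^{[k]}, S_n)` is the same for `k = 1, 2`.  Since the answer
  `A_n` is the fixed deterministic function `ans` of `(Q_n, S_n)` (not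
  depending on `k`), this is expressed as equality of the joint distributions of
  `(Q_n, S_n)` (messages uniform, queries independent of messages). -/
  privacy : ∀ (n : Fin 2) (q : Q) (s : Fin (stor n) → ZMod 2),
    (∑ qq : Q × Q, if (if n = 0 then qq.1 else qq.2) = q then P 0 qq else 0) *
      ((Finset.univ.filter (fun w : Msg L × Msg L => phi n w = s)).card : ℝ) =
    (∑ qq : Q × Q, if (if n = 0 then qq.1 else qq.2) = q then P 1 qq else 0) *
      ((Finset.univ.filter (fun w : Msg L × Msg L => phi n w = s)).card : ℝ)

variable {L : ℕ} {Q : Type} [Fintype Q] [DecidableEq Q]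

/-- The desired message `W_k`. -/
def target (k : Fin 2) (w : Msg L × Msg L) : Msg L := if k = 0 then w.1 else w.2

/-- The decoder output `Ŵ_k` when the realized queries are `qq` and the messages `w`. -/
def retrieved (C : CodeBase L Q) (k : Fin 2) (qq : Q × Q) (w : Msg L × Msg L) : Msg L :=
  C.dec k qq.1 qq.2 (C.ans 0 qq.1 (C.phi 0 w)) (C.ans 1 qq.2 (C.phi 1 w))

/-- Zero-error correctness: `Ŵ_k = W_k` for all realizations. -/
def IsZeroError (C : CodeBase L Q) : Prop :=
  ∀ (k : Fin 2) (w : Msg L × Msg L) (qq : Q × Q), C.P k qq ≠ 0 →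
    retrieved C k qq w = target k w

/-- The average probability of error `P_e`. -/
noncomputable def Pe (C : CodeBase L Q) : ℝ :=
  (1/2) * ∑ k : Fin 2, ∑ w : Msg L × Msg L, ∑ qq : Q × Q,
    ((2:ℝ)^(2*L))⁻¹ * C.P k qq * (if retrieved C k qq w ≠ target k w then 1 else 0)

/-- The retrieval rate `β_n = E[β_n^{(Q_n)}]` (the marginal of `Q_n` is the same
for `k=1,2` by privacy; we use `k=1`, i.e. index `0`). -/
noncomputable def betaRate (C : CodeBase L Q) (n : Fin 2) : ℝ :=
  ∑ qq : Q × Q, C.P 0 qq * (C.blen n (if n = 0 then qq.1 else qq.2) : ℝ)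

/-- A linear PIR code: storage encoders and answer functions are `F_2`-linear. -/
def IsLinear (C : CodeBase L Q) : Prop :=
  (∀ n : Fin 2, IsLinearMap (ZMod 2) (C.phi n)) ∧
  (∀ (n : Fin 2) (q : Q), IsLinearMap (ZMod 2) (C.ans n q))

/-- A bundled PIR code (with its query alphabet). -/
structure Code (L : ℕ) where
  Q : Type
  [fQ : Fintype Q]
  [dQ : DecidableEq Q]
  base : CodeBase L Q

attribute [instance] Code.fQ Code.dQ

/-- A normalized storage-retrieval pair `(ᾱ, β̄)` is achievable. -/
def Achievable (ab : ℝ × ℝ) : Prop :=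
  ∀ ε > (0:ℝ), ∃ L₀ : ℕ, ∀ L ≥ L₀, ∃ C : Code L,
    IsZeroError C.base ∧
    ((C.base.stor 0 + C.base.stor 1 : ℕ) : ℝ) / 2 ≤ L * (ab.1 + ε) ∧
    (betaRate C.base 0 + betaRate C.base 1) / 2 ≤ L * (ab.2 + ε)

/-- Achievability by linear codes. -/
def LinAchievable (ab : ℝ × ℝ) : Prop :=
  ∀ ε > (0:ℝ), ∃ L₀ : ℕ, ∀ L ≥ L₀, ∃ C : Code L,
    IsZeroError C.base ∧ IsLinear C.base ∧
    ((C.base.stor 0 + C.base.stor 1 : ℕ) : ℝ) / 2 ≤ L * (ab.1 + ε) ∧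
    (betaRate C.base 0 + betaRate C.base 1) / 2 ≤ L * (ab.2 + ε)

/-- The achievable storage-retrieval rate region `R`. -/
def Region : Set (ℝ × ℝ) := { ab | Achievable ab }

/-- The query distribution used for the `(2,2)` PIR system: for message 1,
uniform on `{(1,1),(2,2)}`; for message 2, uniform on `{(1,2),(2,1)}`. -/
noncomputable def stdP : Fin 2 → Fin 2 × Fin 2 → ℝ :=
  fun k qq => if (k = 0 ∧ qq.1 = qq.2) ∨ (k = 1 ∧ qq.1 ≠ qq.2) then 1/2 else 0



/-- Probability that a random variable `X` (on finite sample space `Ω` with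
probability mass function `p`) takes the value `x`. -/
noncomputable def prOf {Ω : Type} [Fintype Ω] {γ : Type} [DecidableEq γ]
    (p : Ω → ℝ) (X : Ω → γ) (x : γ) : ℝ :=
  ∑ ω : Ω, if X ω = x then p ω else 0

/-- Shannon entropy (in bits) of the random variable `X`. -/
noncomputable def ent {Ω : Type} [Fintype Ω] {γ : Type} [Fintype γ] [DecidableEq γ]
    (p : Ω → ℝ) (X : Ω → γ) : ℝ :=
  ∑ x : γ, -(prOf p X x * Real.logb 2 (prOf p X x))

/-- Conditional entropy `H(X|Y) = H(X,Y) - H(Y)` (in bits). -/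
noncomputable def condEnt {Ω : Type} [Fintype Ω] {γ δ : Type} [Fintype γ] [DecidableEq γ]
    [Fintype δ] [DecidableEq δ] (p : Ω → ℝ) (X : Ω → γ) (Y : Ω → δ) : ℝ :=
  ent p (fun ω => (X ω, Y ω)) - ent p Y

/-- Mutual information `I(X;Y)` (in bits). -/
noncomputable def mi {Ω : Type} [Fintype Ω] {γ δ : Type} [Fintype γ] [DecidableEq γ]
    [Fintype δ] [DecidableEq δ] (p : Ω → ℝ) (X : Ω → γ) (Y : Ω → δ) : ℝ :=
  ent p X + ent p Y - ent p (fun ω => (X ω, Y ω))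

/-- Conditional mutual information `I(X;Y|Z)` (in bits). -/
noncomputable def cmi {Ω : Type} [Fintype Ω] {γ δ ε : Type} [Fintype γ] [DecidableEq γ]
    [Fintype δ] [DecidableEq δ] [Fintype ε] [DecidableEq ε]
    (p : Ω → ℝ) (X : Ω → γ) (Y : Ω → δ) (Z : Ω → ε) : ℝ :=
  ent p (fun ω => (X ω, Z ω)) + ent p (fun ω => (Y ω, Z ω))
    - ent p (fun ω => (X ω, Y ω, Z ω)) - ent p Z

/-- Joint entropy `H({U_i, i ∈ A})` of the subfamily indexed by `A`. -/
noncomputable def jEnt {Ω : Type} [Fintype Ω] {γ : Type} [Fintype γ] [DecidableEq γ]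
    {M : ℕ} (p : Ω → ℝ) (U : Fin M → Ω → γ) (A : Finset (Fin M)) : ℝ :=
  ent p (fun ω => fun i : {i // i ∈ A} => U i.1 ω)

/-- Conditional joint entropy `H({U_j, j ∈ J} | {U_j', j' ∈ B})`. -/
noncomputable def cjEnt {Ω : Type} [Fintype Ω] {γ : Type} [Fintype γ] [DecidableEq γ]
    {M : ℕ} (p : Ω → ℝ) (U : Fin M → Ω → γ) (J B : Finset (Fin M)) : ℝ :=
  jEnt p U (J ∪ B) - jEnt p U B

/-- Conditional joint entropy `H({U_i, i ∈ A} | S)`. -/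
noncomputable def jEntCondS {Ω : Type} [Fintype Ω] {γ τ : Type} [Fintype γ] [DecidableEq γ]
    [Fintype τ] [DecidableEq τ] {M : ℕ}
    (p : Ω → ℝ) (U : Fin M → Ω → γ) (A : Finset (Fin M)) (S : Ω → τ) : ℝ :=
  ent p (fun ω => ((fun i : {i // i ∈ A} => U i.1 ω), S ω)) - ent p S

/-- The binned multiple-description region `R*_MD((S,U_1,…,U_M), ({U_j, j∈A}, A ∈ recs))`:
the rate vectors `(R, R')` with `0 ≤ R_i ≤ R'_i`,
`Σ_{i∈A} R'_i ≥ Σ_{i∈A} H(U_i) − H({U_i,i∈A}|S)` for every `A ⊆ {1,…,M}`, and for every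
reconstruction set `B ∈ recs` and every `J ⊆ B`,
`Σ_{j∈J}(R'_j − R_j) ≤ Σ_{j∈J} H(U_j) − H({U_j,j∈J} | {U_{j'}, j' ∈ B \ J})`. -/
def RstarMD {Ω γ τ : Type} [Fintype Ω] [Fintype γ] [DecidableEq γ] [Fintype τ] [DecidableEq τ]
    {M : ℕ} (p : Ω → ℝ) (S : Ω → τ) (U : Fin M → Ω → γ)
    (recs : Finset (Finset (Fin M))) (R R' : Fin M → ℝ) : Prop :=
  (∀ i, 0 ≤ R i ∧ R i ≤ R' i) ∧
  (∀ A : Finset (Fin M), (∑ i ∈ A, ent p (U i)) - jEntCondS p U A S ≤ ∑ i ∈ A, R' i) ∧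
  (∀ B ∈ recs, ∀ J ⊆ B,
    ∑ j ∈ J, (R' j - R j) ≤ (∑ j ∈ J, ent p (U j)) - cjEnt p U J (B \ J))

/-- Random variables `(X0,X1,X2,Y1,Y2)` (indexed `0,…,4`) jointly distributed with the pair
of messages `(V1,V2)` which is uniform on `F_2^t × F_2^t`. -/
structure RVSetup (t : ℕ) where
  Ω : Type
  [fΩ : Fintype Ω]
  p : Ω → ℝ
  p_nonneg : ∀ ω, 0 ≤ p ω
  p_sum : ∑ ω : Ω, p ω = 1
  γ : Type
  [fγ : Fintype γ]
  [dγ : DecidableEq γ]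
  V : Ω → Msg t × Msg t
  X : Fin 5 → Ω → γ
  V_unif : ∀ v : Msg t × Msg t, prOf p V v = ((2:ℝ)^(2*t))⁻¹

attribute [instance] RVSetup.fΩ RVSetup.fγ RVSetup.dγ

/-- The four reconstruction sets `{X0,X1,Y1},{X0,X1,Y2},{X0,X2,Y1},{X0,X2,Y2}` with the
indexing `0 ↦ X0, 1 ↦ X1, 2 ↦ X2, 3 ↦ Y1, 4 ↦ Y2`. -/
def recs5 : Finset (Finset (Fin 5)) := {{0,1,3}, {0,1,4}, {0,2,3}, {0,2,4}}

/-- The inner-bound region `R^{(t)}_in`. -/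
def RinMem (t : ℕ) (ab : ℝ × ℝ) : Prop :=
  ∃ S : RVSetup t,
    -- (1) decodability of V1 and V2 from the prescribed triples
    (∃ (f11 f12 f21 f22 : S.γ × S.γ × S.γ → Msg t),
      ∀ ω, S.p ω ≠ 0 →
        (S.V ω).1 = f11 (S.X 0 ω, S.X 1 ω, S.X 3 ω) ∧
        (S.V ω).1 = f22 (S.X 0 ω, S.X 2 ω, S.X 4 ω) ∧
        (S.V ω).2 = f12 (S.X 0 ω, S.X 1 ω, S.X 4 ω) ∧
        (S.V ω).2 = f21 (S.X 0 ω, S.X 2 ω, S.X 3 ω)) ∧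
    -- (2),(3),(4): existence of rates
    (∃ β γr : Fin 5 → ℝ,
      RstarMD S.p S.V S.X recs5 β γr ∧
      ∃ α : Fin 5 → ℝ,
        (∀ i, 0 ≤ α i ∧ α i ≤ β i) ∧
        ((γr 0 - β 0) + (γr 1 - β 1) + (γr 2 - β 2) <
            ent S.p (S.X 0) + ent S.p (S.X 1) + ent S.p (S.X 2)
              - jEnt S.p S.X {0,1,2} →
          RstarMD S.p S.V ![S.X 0, S.X 1, S.X 2] {(Finset.univ : Finset (Fin 3))}
            ![α 0, α 1, α 2] ![γr 0, γr 1, γr 2]) ∧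
        (¬ ((γr 0 - β 0) + (γr 1 - β 1) + (γr 2 - β 2) <
            ent S.p (S.X 0) + ent S.p (S.X 1) + ent S.p (S.X 2)
              - jEnt S.p S.X {0,1,2}) →
          α 0 = β 0 ∧ α 1 = β 1 ∧ α 2 = β 2) ∧
        ((γr 3 - β 3) + (γr 4 - β 4) < mi S.p (S.X 3) (S.X 4) →
          RstarMD S.p S.V ![S.X 3, S.X 4] {(Finset.univ : Finset (Fin 2))}
            ![α 3, α 4] ![γr 3, γr 4]) ∧
        (¬ ((γr 3 - β 3) + (γr 4 - β 4) < mi S.p (S.X 3) (S.X 4)) →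
          α 3 = β 3 ∧ α 4 = β 4) ∧
        2 * t * ab.1 ≥ α 0 + α 1 + α 2 + α 3 + α 4 ∧
        4 * t * ab.2 ≥ 2 * β 0 + β 1 + β 2 + β 3 + β 4)

/-!
The two messages are cut into two blocks of `n` i.i.d. pairs `(V₁, V₂)` and fewer than `2t`
remaining symbols of each message, which are stored and sent uncoded. The labels `X₀, X₁, X₂, Y₁`
and `Y₂` of a block are words of length `n`. Two independent families of uniformly random binnings
act on them: one selects the codebook, as the words that fall into prescribed bins, and the other
one produces the bits that are stored and sent.

* Covering: almost every block has jointly typical labels in the codebook, since the likelihood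
  ratio of the event that the labels fall into the prescribed bins has small variance.
* Packing: the bins of the labels in a recovery set, or at a database, almost always determine these
  labels among the jointly typical ones in the codebook, by a union bound over the sets of labels in
  which a competitor may differ.

Queries `q₁` and `q₂` obtain a recovery set for message `q₁ + q₂`, so privacy only depends on the
uniform marginals of the query distribution. Exchanging the roles of the databases between the two
blocks equalizes their storage and retrieval rates.
-/

section RandomFunctions
open Finset

lemma expect_abs_le_sqrt {α : Type*} [Fintype α] [Nonempty α] (f : α → ℝ) :
    𝔼 a, |f a| ≤ √(𝔼 a, f a ^ 2) := by
  refine (le_abs_self _).trans (Real.abs_le_sqrt ?_)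
  simpa using expect_mul_sq_le_sq_mul_sq univ (fun a => |f a|) 1

lemma expect_prod {ι : Type*} [Fintype ι] [DecidableEq ι] {α : ι → Type*} [∀ i, Fintype (α i)]
    (ψ : ∀ i, α i → ℝ) : 𝔼 h : ∀ i, α i, ∏ i, ψ i (h i) = ∏ i, 𝔼 x, ψ i x := by
  simp only [Fintype.expect_eq_sum_div_card, prod_div_distrib, prod_univ_sum, Fintype.piFinset_univ,
    Fintype.card_pi, Nat.cast_prod]

lemma expect_prod_finset {ι : Type*} [Fintype ι] [DecidableEq ι] {α : ι → Type*}
    [∀ i, Fintype (α i)] [∀ i, Nonempty (α i)] (ψ : ∀ i, α i → ℝ) (A : Finset ι) :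
    𝔼 h : ∀ i, α i, ∏ i ∈ A, ψ i (h i) = ∏ i ∈ A, 𝔼 x, ψ i x := by
  simp only [← Fintype.prod_ite_mem A]
  rw [expect_prod fun i x => if i ∈ A then ψ i x else 1]
  exact prod_congr rfl fun i _ => by split_ifs <;> simp

lemma expect_apply {ι : Type*} [Fintype ι] [DecidableEq ι] {α : ι → Type*} [∀ i, Fintype (α i)]
    [∀ i, Nonempty (α i)] (a : ι) (φ : α a → ℝ) : 𝔼 h : ∀ i, α i, φ (h a) = 𝔼 x, φ x := by
  simpa using expect_prod_finset (Function.update (fun _ _ => 1) a φ) {a}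

variable {W Z : Type*} [Fintype W] [DecidableEq W] [Fintype Z] [Nonempty Z]

lemma expect_apply_mul_apply {a b : W} (hab : a ≠ b) (φ ψ : Z → ℝ) :
    𝔼 h : W → Z, φ (h a) * ψ (h b) = (𝔼 z, φ z) * 𝔼 z, ψ z := by
  have h := expect_prod_finset (fun i (z : Z) => if i = a then φ z else ψ z) {a, b}
  simpa [prod_pair hab, hab.symm] using h

variable [DecidableEq Z]

lemma expect_ite_apply_eq_apply {a b : W} (hab : a ≠ b) :
    𝔼 h : W → Z, (if h a = h b then 1 else 0 : ℝ) = (Fintype.card Z : ℝ)⁻¹ := by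
  have eq_sum (h : W → Z) : (if h a = h b then 1 else 0 : ℝ) =
      ∑ z, (if h a = z then 1 else 0) * (if h b = z then 1 else 0) := by
    simp [eq_comm]
  have expect_both (z : Z) :
      𝔼 h : W → Z, (if h a = z then 1 else 0 : ℝ) * (if h b = z then 1 else 0) =
        (Fintype.card Z : ℝ)⁻¹ * (Fintype.card Z : ℝ)⁻¹ := by
    rw [expect_apply_mul_apply hab (fun x => if x = z then (1 : ℝ) else 0)
      (fun x => if x = z then 1 else 0)]
    simp [NNRat.smul_def]
  simp_rw [eq_sum, expect_sum_comm, expect_both]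
  simp

end RandomFunctions

section Distributions
open Finset

variable {Ω γ δ : Type} [Fintype Ω] [DecidableEq γ] [DecidableEq δ] {p : Ω → ℝ}

/-- The probability that `X` takes the value it takes at the outcome `ω`. -/
noncomputable def atomProb (p : Ω → ℝ) (X : Ω → γ) (ω : Ω) : ℝ := prOf p X (X ω)

lemma atomProb_congr {X : Ω → γ} {Y : Ω → δ} {ω : Ω} (h : ∀ ω', X ω' = X ω ↔ Y ω' = Y ω) :
    atomProb p X ω = atomProb p Y ω := by
  simp only [atomProb, prOf, h]

lemma prOf_nonneg (hp : ∀ ω, 0 ≤ p ω) (X : Ω → γ) (x : γ) : 0 ≤ prOf p X x :=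
  sum_nonneg fun ω _ => by split_ifs <;> simp [hp ω]

lemma sum_filter_eq_le_prOf (hp : ∀ ω, 0 ≤ p ω) (X : Ω → γ) (T : Finset Ω) (x : γ) :
    ∑ ω ∈ T with X ω = x, p ω ≤ prOf p X x := by
  rw [sum_filter]
  exact sum_le_univ_sum_of_nonneg fun ω => by split_ifs <;> simp [hp ω]

lemma le_atomProb (hp : ∀ ω, 0 ≤ p ω) (X : Ω → γ) (ω : Ω) : p ω ≤ atomProb p X ω := by
  simpa [atomProb, prOf] using single_le_sum (f := fun ω' => if X ω' = X ω then p ω' else 0)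
    (fun ω' _ => by split_ifs <;> simp [hp ω']) (mem_univ ω)

lemma sum_prOf_mul [Fintype γ] (p : Ω → ℝ) (X : Ω → γ) (g : γ → ℝ) :
    ∑ x, prOf p X x * g x = ∑ ω, p ω * g (X ω) := by
  simp only [prOf, sum_mul, ite_mul, zero_mul]
  rw [sum_comm]
  simp

lemma sum_prOf [Fintype γ] (p : Ω → ℝ) (X : Ω → γ) : ∑ x, prOf p X x = ∑ ω, p ω := by
  simpa using sum_prOf_mul p X 1

lemma ent_eq_sum_atomProb [Fintype γ] (p : Ω → ℝ) (X : Ω → γ) :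
    ent p X = ∑ ω, p ω * -Real.logb 2 (atomProb p X ω) := by
  simp only [ent, ← mul_neg, sum_prOf_mul, atomProb]

lemma ent_congr [Fintype γ] [Fintype δ] {X : Ω → γ} {Y : Ω → δ}
    (h : ∀ ω ω', X ω = X ω' ↔ Y ω = Y ω') : ent p X = ent p Y := by
  simp only [ent_eq_sum_atomProb, atomProb_congr fun ω' => h ω' _]

/-- The law of `n` independent outcomes with common law `p`. -/
def iid (p : Ω → ℝ) (n : ℕ) (ω : Fin n → Ω) : ℝ := ∏ k, p (ω k)

lemma iid_mem_stdSimplex (hp : p ∈ stdSimplex ℝ Ω) (n : ℕ) :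
    iid p n ∈ stdSimplex ℝ (Fin n → Ω) := by
  refine ⟨fun ω => prod_nonneg fun k _ => hp.1 _, ?_⟩
  simp only [iid, ← Fintype.piFinset_univ, sum_prod_piFinset, hp.2, prod_const_one]

lemma prOf_iid (p : Ω → ℝ) (X : Ω → γ) {n : ℕ} (x : Fin n → γ) :
    prOf (iid p n) (fun ω k => X (ω k)) x = ∏ k, prOf p X (x k) := by
  simp only [prOf, iid, prod_univ_sum, Fintype.piFinset_univ, funext_iff]
  exact sum_congr rfl fun ω _ => by rw [Fintype.prod_ite_zero]; congr

lemma atomProb_iid (p : Ω → ℝ) (X : Ω → γ) {n : ℕ} (ω : Fin n → Ω) :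
    atomProb (iid p n) (fun ω k => X (ω k)) ω = ∏ k, atomProb p X (ω k) :=
  prOf_iid p X fun k => X (ω k)

end Distributions

section WeakLaw
open Finset MeasureTheory ProbabilityTheory Filter
open scoped Topology

lemma tendsto_measureReal_pi_le_abs_sum_sub {Ω : Type*} [MeasurableSpace Ω] (μ : Measure Ω)
    [IsProbabilityMeasure μ] {f : Ω → ℝ} (hf : MemLp f 2 μ) {δ : ℝ} (hδ : 0 < δ) :
    Tendsto (fun n : ℕ => (Measure.pi fun _ : Fin n => μ).real
      {ω | n * δ ≤ |∑ k, f (ω k) - n * ∫ x, f x ∂μ|}) atTop (𝓝 0) := by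
  have hfk {n : ℕ} (k : Fin n) : MemLp (fun ω : Fin n → Ω => f (ω k)) 2 (Measure.pi fun _ => μ) :=
    hf.comp_measurePreserving (measurePreserving_eval (fun _ => μ) k)
  have mean (n : ℕ) :
      ∫ ω, ∑ k, f (ω k) ∂(Measure.pi fun _ : Fin n => μ) = n * ∫ x, f x ∂μ := by
    rw [integral_finsetSum _ fun k _ => (hfk k).integrable one_le_two]
    simp [integral_comp_eval (μ := fun _ => μ) hf.aestronglyMeasurable]
  have variance (n : ℕ) :
      Var[fun ω => ∑ k, f (ω k); Measure.pi fun _ : Fin n => μ] = n * Var[f; μ] := by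
    have h := variance_sum_pi (μ := fun _ : Fin n => μ) (X := fun _ => f) fun _ => hf
    simpa [Finset.sum_fn] using h
  have bound : Tendsto (fun n : ℕ => Var[f; μ] / δ ^ 2 / n) atTop (𝓝 0) :=
    tendsto_const_div_atTop_nhds_zero_nat (𝕜 := ℝ) _
  refine squeeze_zero' (.of_forall fun n => measureReal_nonneg) ?_ bound
  filter_upwards [eventually_gt_atTop 0] with n hn
  have hn' : (0 : ℝ) < n := Nat.cast_pos.2 hn
  have chebyshev := meas_ge_le_variance_div_sq (memLp_finsetSum univ fun (k : Fin n) _ => hfk k)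
    (mul_pos hn' hδ)
  rw [mean, variance] at chebyshev
  refine (ENNReal.toReal_le_of_le_ofReal ?_ chebyshev).trans_eq ?_
  · have := variance_nonneg f μ
    positivity
  · field_simp

lemma tendsto_sum_iid_le_abs_sum_sub {Ω : Type} [Fintype Ω] {p : Ω → ℝ} (hp : p ∈ stdSimplex ℝ Ω)
    (f : Ω → ℝ) {δ : ℝ} (hδ : 0 < δ) :
    Tendsto (fun n : ℕ => ∑ ω : Fin n → Ω with n * δ ≤ |∑ k, f (ω k) - n * ∑ x, p x * f x|,
      iid p n ω) atTop (𝓝 0) := by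
  let _ : MeasurableSpace Ω := ⊤
  have hsum : ∑ x, ENNReal.ofReal (p x) = 1 := by
    rw [← ENNReal.ofReal_sum_of_nonneg fun x _ => hp.1 x, hp.2, ENNReal.ofReal_one]
  let μ : Measure Ω := (PMF.ofFintype (fun x => ENNReal.ofReal (p x)) hsum).toMeasure
  have hμ (x : Ω) : μ.real {x} = p x := by
    rw [measureReal_def, PMF.toMeasure_apply_singleton _ _ (measurableSet_singleton x),
      PMF.ofFintype_apply, ENNReal.toReal_ofReal (hp.1 x)]
  have hpi {n : ℕ} (ω : Fin n → Ω) : (Measure.pi fun _ => μ).real {ω} = iid p n ω := by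
    simp only [measureReal_def, Measure.pi_singleton, ENNReal.toReal_prod, iid, ← hμ]
  have mean : ∫ x, f x ∂μ = ∑ x, p x * f x := by simp [integral_fintype .of_finite, hμ]
  have weak_law := tendsto_measureReal_pi_le_abs_sum_sub μ (f := f) .of_discrete hδ
  refine weak_law.congr fun n => ?_
  simp only [mean, ← hpi, sum_measureReal_singleton, coe_filter, mem_univ, true_and]

end WeakLaw

section Subfamily

variable {Ω W ι : Type}

/-- The subfamily of `U` indexed by `A`, as a single random variable. -/
def subfamily (U : ι → Ω → W) (A : Finset ι) (ω : Ω) (j : {j // j ∈ A}) : W := U j ω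

lemma subfamily_eq_iff {U : ι → Ω → W} {A : Finset ι} {ω ω' : Ω} :
    subfamily U A ω = subfamily U A ω' ↔ ∀ j ∈ A, U j ω = U j ω' := by
  simp [funext_iff, subfamily]

end Subfamily

section Covering
open Finset

variable {Ω σ W ι : Type} [Fintype ι] {F : ι → Type} [∀ j, Fintype (F j)] [∀ j, DecidableEq (F j)]

/-- The likelihood ratio of the event that `ω` lands in the prescribed bins `f`: it vanishes off
this event and has mean one over uniformly random binning functions `h`. -/
def density (h : ∀ j, W → F j) (f : ∀ j, F j) (U : ι → Ω → W) (ω : Ω) : ℝ :=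
  ∏ j, if h j (U j ω) = f j then (Fintype.card (F j) : ℝ) else 0

lemma density_eq_zero {h : ∀ j, W → F j} {f : ∀ j, F j} {U : ι → Ω → W} {ω : Ω}
    (hω : ¬ ∀ j, h j (U j ω) = f j) : density h f U ω = 0 := by
  simp [density, prod_ite_zero, hω]

lemma density_nonneg (h : ∀ j, W → F j) (f : ∀ j, F j) (U : ι → Ω → W) (ω : Ω) :
    0 ≤ density h f U ω :=
  prod_nonneg fun j _ => by split_ifs <;> positivity

variable [DecidableEq ι] [∀ j, Nonempty (F j)]

lemma expect_bins_density (h : ∀ j, W → F j) (U : ι → Ω → W) (ω : Ω) :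
    𝔼 f, density h f U ω = 1 := by
  simp only [density]
  rw [expect_prod fun j x => if h j (U j ω) = x then (Fintype.card (F j) : ℝ) else 0]
  simp [NNRat.smul_def]

variable [Fintype W] [DecidableEq W]

lemma expect_density (f : ∀ j, F j) (U : ι → Ω → W) (ω : Ω) : 𝔼 h, density h f U ω = 1 := by
  have factor (j : ι) :
      𝔼 g : W → F j, (if g (U j ω) = f j then (Fintype.card (F j) : ℝ) else 0) = 1 := by
    rw [expect_apply (α := fun _ => F j) (U j ω)
      fun x => if x = f j then (Fintype.card (F j) : ℝ) else 0]
    simp [NNRat.smul_def]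
  simp only [density]
  rw [expect_prod fun j (g : W → F j) => if g (U j ω) = f j then (Fintype.card (F j) : ℝ) else 0]
  simp [factor]

lemma expect_density_mul_density (f : ∀ j, F j) (U : ι → Ω → W) (ω ω' : Ω) :
    𝔼 h, density h f U ω * density h f U ω' =
      ∑ A, if subfamily U A ω' = subfamily U A ω then ∏ j ∈ A, ((Fintype.card (F j) : ℝ) - 1)
        else 0 := by
  let ψ (j : ι) (x : F j) : ℝ := if x = f j then Fintype.card (F j) else 0
  have factor (j : ι) : 𝔼 g : W → F j, ψ j (g (U j ω)) * ψ j (g (U j ω')) =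
      1 + if U j ω' = U j ω then (Fintype.card (F j) : ℝ) - 1 else 0 := by
    split_ifs with hU
    · rw [hU, expect_apply (α := fun _ => F j) (U j ω) fun x => ψ j x * ψ j x]
      simp [ψ, NNRat.smul_def]
    · rw [expect_apply_mul_apply (Ne.symm hU)]
      simp [ψ, NNRat.smul_def]
  calc 𝔼 h, density h f U ω * density h f U ω'
      = ∏ j, (1 + if U j ω' = U j ω then (Fintype.card (F j) : ℝ) - 1 else 0) := by
        simp only [density, ← prod_mul_distrib, ← factor]
        exact expect_prod fun j (g : W → F j) => ψ j (g (U j ω)) * ψ j (g (U j ω'))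
    _ = _ := by
        simp only [prod_one_add, prod_ite_zero, powerset_univ]
        exact sum_congr rfl fun A _ => by simp only [subfamily_eq_iff]; congr

lemma expect_density_sub_one_mul (f : ∀ j, F j) (U : ι → Ω → W) (ω ω' : Ω) :
    𝔼 h, (density h f U ω - 1) * (density h f U ω' - 1) =
      ∑ A with A.Nonempty, if subfamily U A ω' = subfamily U A ω then
        ∏ j ∈ A, ((Fintype.card (F j) : ℝ) - 1) else 0 := by
  calc 𝔼 h, (density h f U ω - 1) * (density h f U ω' - 1)
      = 𝔼 h, density h f U ω * density h f U ω' - 1 := by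
        simp only [sub_mul, mul_sub, expect_sub_distrib, expect_density, mul_one, one_mul,
          Fintype.expect_const]
        ring
    _ = _ := by
        rw [expect_density_mul_density, ← add_sum_erase _ _ (mem_univ ∅)]
        simp [subfamily_eq_iff, nonempty_iff_ne_empty, filter_ne']

lemma expect_sq_sum_mul_density_sub_one (p : Ω → ℝ) (U : ι → Ω → W) (f : ∀ j, F j)
    (T : Finset Ω) :
    𝔼 h, (∑ ω ∈ T, p ω * (density h f U ω - 1)) ^ 2 =
      ∑ A with A.Nonempty, (∏ j ∈ A, ((Fintype.card (F j) : ℝ) - 1)) *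
        ∑ ω ∈ T, p ω * ∑ ω' ∈ T, if subfamily U A ω' = subfamily U A ω then p ω' else 0 := by
  calc 𝔼 h, (∑ ω ∈ T, p ω * (density h f U ω - 1)) ^ 2
      = ∑ ω ∈ T, ∑ ω' ∈ T, p ω * p ω' *
          𝔼 h, (density h f U ω - 1) * (density h f U ω' - 1) := by
        simp only [sq, sum_mul_sum, expect_sum_comm, mul_expect, mul_mul_mul_comm]
    _ = _ := by
        simp only [expect_density_sub_one_mul, mul_sum]
        rw [sum_comm_cycle]
        refine sum_congr rfl fun A _ => sum_congr rfl fun ω _ => sum_congr rfl fun ω' _ => ?_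
        split_ifs <;> ring

variable [Fintype Ω] [DecidableEq σ] {p : Ω → ℝ}

lemma expect_abs_sum_density_sub_one_le (hp : ∀ ω, 0 ≤ p ω) {S : Ω → σ} {U : ι → Ω → W}
    {T : Finset Ω} {τ : Finset ι → ℝ} (hτ : ∀ A, 0 ≤ τ A)
    (hT : ∀ ω ∈ T, ∀ A, A.Nonempty →
      atomProb p (fun ω => (subfamily U A ω, S ω)) ω ≤ prOf p S (S ω) * τ A)
    (f : ∀ j, F j) (s : σ) :
    𝔼 h, |∑ ω ∈ T with S ω = s, p ω * (density h f U ω - 1)| ≤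
      prOf p S s * √(∑ A with A.Nonempty, (∏ j ∈ A, ((Fintype.card (F j) : ℝ) - 1)) * τ A) := by
  set Ts := {ω ∈ T | S ω = s}
  set q := prOf p S s
  have hq : 0 ≤ q := prOf_nonneg hp S s
  have agree_le (A : Finset ι) (hA : A.Nonempty) (ω : Ω) (hω : ω ∈ Ts) :
      ∑ ω' ∈ Ts, (if subfamily U A ω' = subfamily U A ω then p ω' else 0) ≤ q * τ A := by
    obtain ⟨hωT, rfl⟩ := mem_filter.1 hω
    have filter_eq : {ω' ∈ Ts | subfamily U A ω' = subfamily U A ω} =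
        {ω' ∈ T | (subfamily U A ω', S ω') = (subfamily U A ω, S ω)} := by
      grind
    rw [← sum_filter, filter_eq]
    exact (sum_filter_eq_le_prOf hp _ T _).trans (hT ω hωT A hA)
  have second_moment : 𝔼 h, (∑ ω ∈ Ts, p ω * (density h f U ω - 1)) ^ 2 ≤
      q ^ 2 * ∑ A with A.Nonempty, (∏ j ∈ A, ((Fintype.card (F j) : ℝ) - 1)) * τ A := by
    rw [expect_sq_sum_mul_density_sub_one, mul_sum]
    refine sum_le_sum fun A hA => ?_
    have card_sub_one_nonneg (j : ι) : (0 : ℝ) ≤ Fintype.card (F j) - 1 :=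
      sub_nonneg.2 (Nat.one_le_cast.2 Fintype.card_pos)
    calc _ ≤ (∏ j ∈ A, ((Fintype.card (F j) : ℝ) - 1)) * ∑ ω ∈ Ts, p ω * (q * τ A) := by
          gcongr with ω hω
          · exact prod_nonneg fun j _ => card_sub_one_nonneg j
          · exact hp ω
          · exact agree_le A (mem_filter.1 hA).2 ω hω
      _ ≤ (∏ j ∈ A, ((Fintype.card (F j) : ℝ) - 1)) * (q * (q * τ A)) := by
          rw [← sum_mul]
          have := hτ A
          gcongr
          · exact prod_nonneg fun j _ => card_sub_one_nonneg j
          · exact sum_filter_eq_le_prOf hp S T s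
      _ = _ := by ring
  calc _ ≤ √(q ^ 2 * ∑ A with A.Nonempty, (∏ j ∈ A, ((Fintype.card (F j) : ℝ) - 1)) * τ A) :=
        (expect_abs_le_sqrt _).trans (Real.sqrt_le_sqrt second_moment)
    _ = _ := by rw [Real.sqrt_mul (sq_nonneg q), Real.sqrt_sq hq]

end Covering

section Packing
open Finset

lemma exists_subset_card_eq_card_image {α β : Type*} [DecidableEq β] (s : Finset α) (f : α → β) :
    ∃ V ⊆ s, #V = #(s.image f) ∧ ∀ a ∈ s, ∃ v ∈ V, f v = f a := by
  obtain ⟨V, hV, hinj, himage⟩ := exists_subset_injOn_image_eq_of_surjOn (f := f)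
    s (s.image f) (by simp [Set.SurjOn])
  exact ⟨V, mod_cast hV, by rw [← himage, card_image_of_injOn hinj],
    fun a ha => mem_image.1 (himage ▸ mem_image_of_mem f ha)⟩

variable {Ω W ι : Type} {F B : ι → Type}

/-- Some outcome in `T` has the same `R`-indices as `ω`, under the binning functions `h` and the
labelling functions `b`, but a different `R`-subfamily: a decoder of `R` cannot recover `ω`. -/
def Confusable (T : Finset Ω) (U : ι → Ω → W) (h : ∀ j, W → F j) (b : ∀ j, W → B j)
    (R : Finset ι) (ω : Ω) : Prop :=
  ∃ ω' ∈ T, (∀ j ∈ R, h j (U j ω') = h j (U j ω) ∧ b j (U j ω') = b j (U j ω)) ∧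
    subfamily U R ω' ≠ subfamily U R ω

variable [DecidableEq ι]

open Classical in
/-- The outcomes of `T` whose `R`-subfamily differs from that of `ω` exactly at the indices in
`J`. -/
noncomputable def competitors (T : Finset Ω) (U : ι → Ω → W) (R J : Finset ι) (ω : Ω) : Finset Ω :=
  {ω' ∈ T | (∀ j ∈ R \ J, U j ω' = U j ω) ∧ ∀ j ∈ J, U j ω' ≠ U j ω}

lemma mem_competitors {T : Finset Ω} {U : ι → Ω → W} {R J : Finset ι} {ω ω' : Ω} :
    ω' ∈ competitors T U R J ω ↔
      ω' ∈ T ∧ (∀ j ∈ R \ J, U j ω' = U j ω) ∧ ∀ j ∈ J, U j ω' ≠ U j ω := by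
  simp only [competitors, mem_filter]

lemma Confusable.exists_mem_competitors {T : Finset Ω} {U : ι → Ω → W} {h : ∀ j, W → F j}
    {b : ∀ j, W → B j} {R : Finset ι} {ω : Ω} (hω : Confusable T U h b R ω) :
    ∃ J ⊆ R, J.Nonempty ∧ ∃ ω' ∈ competitors T U R J ω,
      ∀ j ∈ J, h j (U j ω') = h j (U j ω) ∧ b j (U j ω') = b j (U j ω) := by
  classical
  obtain ⟨ω', hω', hagree, hne⟩ := hω
  simp only [ne_eq, subfamily_eq_iff, not_forall] at hne
  obtain ⟨j, hjR, hj⟩ := hne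
  refine ⟨{j ∈ R | U j ω' ≠ U j ω}, filter_subset _ _, ⟨j, mem_filter.2 ⟨hjR, hj⟩⟩, ω', ?_,
    fun j hj => hagree j (mem_filter.1 hj).1⟩
  rw [mem_competitors]
  grind

variable [Fintype ι] [Fintype W] [DecidableEq W] [∀ j, Fintype (F j)] [∀ j, Nonempty (F j)]

open Classical in
lemma expect_ite_forall_apply_eq_apply {u v : ι → W} {J : Finset ι} (huv : ∀ j ∈ J, u j ≠ v j) :
    𝔼 h : ∀ j, W → F j, (if ∀ j ∈ J, h j (u j) = h j (v j) then 1 else 0 : ℝ) =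
      ∏ j ∈ J, (Fintype.card (F j) : ℝ)⁻¹ := by
  calc _ = 𝔼 h : ∀ j, W → F j, ∏ j ∈ J, (if h j (u j) = h j (v j) then 1 else 0 : ℝ) :=
        expect_congr rfl fun h _ => by simp [prod_ite_zero]
    _ = _ := by
        rw [expect_prod_finset fun j (g : W → F j) => if g (u j) = g (v j) then (1 : ℝ) else 0]
        exact prod_congr rfl fun j hj => expect_ite_apply_eq_apply (huv j hj)

variable [∀ j, Fintype (B j)] [∀ j, Nonempty (B j)]

open Classical in
lemma expect_ite_forall_apply_eq_apply_and {u v : ι → W} {J : Finset ι}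
    (huv : ∀ j ∈ J, u j ≠ v j) :
    𝔼 h : ∀ j, W → F j, 𝔼 b : ∀ j, W → B j,
      (if ∀ j ∈ J, h j (u j) = h j (v j) ∧ b j (u j) = b j (v j) then 1 else 0 : ℝ) =
        ∏ j ∈ J, ((Fintype.card (F j) : ℝ) * Fintype.card (B j))⁻¹ := by
  calc _ = 𝔼 h : ∀ j, W → F j, 𝔼 b : ∀ j, W → B j,
        (if ∀ j ∈ J, h j (u j) = h j (v j) then 1 else 0 : ℝ) *
          (if ∀ j ∈ J, b j (u j) = b j (v j) then 1 else 0) :=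
        expect_congr rfl fun h _ => expect_congr rfl fun b _ => by
          simp only [forall₂_and, ite_zero_mul_ite_zero, mul_one]
    _ = _ := by
        simp only [← expect_mul_expect, expect_ite_forall_apply_eq_apply huv, mul_inv,
          prod_mul_distrib]

open Classical in
lemma expect_confusable_le {T : Finset Ω} {U : ι → Ω → W} {R : Finset ι} {ω : Ω}
    {N : Finset ι → ℝ}
    (hN : ∀ J ⊆ R, J.Nonempty → #((competitors T U R J ω).image (subfamily U J)) ≤ N J) :
    𝔼 h : ∀ j, W → F j, 𝔼 b : ∀ j, W → B j, (if Confusable T U h b R ω then 1 else 0 : ℝ) ≤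
      ∑ J ∈ R.powerset with J.Nonempty,
        N J * ∏ j ∈ J, ((Fintype.card (F j) : ℝ) * Fintype.card (B j))⁻¹ := by
  choose V hVsub hVcard hVrep using fun J =>
    exists_subset_card_eq_card_image (competitors T U R J ω) (subfamily U J)
  let collide (h : ∀ j, W → F j) (b : ∀ j, W → B j) (J : Finset ι) (ω' : Ω) : ℝ :=
    if ∀ j ∈ J, h j (U j ω') = h j (U j ω) ∧ b j (U j ω') = b j (U j ω) then 1 else 0
  have collide_nonneg (h b J ω') : 0 ≤ collide h b J ω' := by
    dsimp only [collide]; split_ifs <;> simp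
  have union_bound (h : ∀ j, W → F j) (b : ∀ j, W → B j) :
      (if Confusable T U h b R ω then 1 else 0 : ℝ) ≤
        ∑ J ∈ R.powerset with J.Nonempty, ∑ ω' ∈ V J, collide h b J ω' := by
    have inner_nonneg (J) : 0 ≤ ∑ ω' ∈ V J, collide h b J ω' :=
      sum_nonneg fun ω' _ => collide_nonneg h b J ω'
    split_ifs with hconf
    · obtain ⟨J, hJR, hJ, ω', hω', hagree⟩ := hconf.exists_mem_competitors
      obtain ⟨ω'', hω'', heq⟩ := hVrep J ω' hω'
      rw [subfamily_eq_iff] at heq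
      calc (1 : ℝ) = collide h b J ω'' :=
            (if_pos fun j hj => by rw [heq j hj]; exact hagree j hj).symm
        _ ≤ ∑ ω' ∈ V J, collide h b J ω' :=
            single_le_sum (fun ω' _ => collide_nonneg h b J ω') hω''
        _ ≤ _ := single_le_sum (f := fun J => ∑ ω' ∈ V J, collide h b J ω')
            (fun J _ => inner_nonneg J) (mem_filter.2 ⟨mem_powerset.2 hJR, hJ⟩)
    · exact sum_nonneg fun J _ => inner_nonneg J
  refine (expect_le_expect fun h _ => expect_le_expect fun b _ => union_bound h b).trans ?_
  simp only [expect_sum_comm]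
  refine sum_le_sum fun J hJ => ?_
  obtain ⟨hJR, hJ⟩ := mem_filter.1 hJ
  calc _ = ∑ _ω' ∈ V J, ∏ j ∈ J, ((Fintype.card (F j) : ℝ) * Fintype.card (B j))⁻¹ :=
        sum_congr rfl fun _ hω' => expect_ite_forall_apply_eq_apply_and
          (v := (U · ω)) (mem_competitors.1 (hVsub J hω')).2.2
    _ ≤ _ := by
        rw [sum_const, nsmul_eq_mul, hVcard]
        gcongr
        exact hN J (mem_powerset.1 hJR) hJ

end Packing

section OneShot
open Finset

variable {Ω σ W ι C : Type} {F : ι → Type} {B : C → ι → Type}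

/-- The outcome `ω` can serve as a codeword: it lies in `T`, falls in the prescribed bins `f`, and
for each task `(R, c)` it can be recovered from its `R`-labels in layer `c`. -/
def IsCodeword (T : Finset Ω) (U : ι → Ω → W) (tasks : Finset (Finset ι × C)) (f : ∀ j, F j)
    (h : ∀ j, W → F j) (b : ∀ c j, W → B c j) (ω : Ω) : Prop :=
  ω ∈ T ∧ (∀ j, h j (U j ω) = f j) ∧ ∀ R ∈ tasks, ¬ Confusable T U h (b R.2) R.1 ω

lemma IsCodeword.subfamily_eq {T : Finset Ω} {U : ι → Ω → W} {tasks : Finset (Finset ι × C)}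
    {f : ∀ j, F j} {h : ∀ j, W → F j} {b : ∀ c j, W → B c j} {ω ω' : Ω}
    (hω : IsCodeword T U tasks f h b ω) (hω' : IsCodeword T U tasks f h b ω')
    {R : Finset ι × C} (hR : R ∈ tasks)
    (hagree : ∀ j ∈ R.1, b R.2 j (U j ω') = b R.2 j (U j ω)) :
    subfamily U R.1 ω' = subfamily U R.1 ω := by
  by_contra hne
  exact hω.2.2 R hR ⟨ω', hω'.1, fun j hj => ⟨by rw [hω'.2.1, hω.2.1], hagree j hj⟩, hne⟩

variable [Fintype ι] [∀ j, Fintype (F j)] [∀ j, DecidableEq (F j)]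

open Classical in
lemma density_le_mul_sum_confusable {T : Finset Ω} {U : ι → Ω → W}
    {tasks : Finset (Finset ι × C)} {f : ∀ j, F j} {h : ∀ j, W → F j} {b : ∀ c j, W → B c j}
    {ω : Ω} (hωT : ω ∈ T) (hω : ¬ IsCodeword T U tasks f h b ω) :
    density h f U ω ≤ ∑ R ∈ tasks,
      density h f U ω * (if Confusable T U h (b R.2) R.1 ω then 1 else 0) := by
  by_cases hbins : ∀ j, h j (U j ω) = f j
  · obtain ⟨R, hR, hconf⟩ : ∃ R ∈ tasks, Confusable T U h (b R.2) R.1 ω := by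
      by_contra! hnot
      exact hω ⟨hωT, hbins, hnot⟩
    have nonneg (R : Finset ι × C) :
        0 ≤ density h f U ω * (if Confusable T U h (b R.2) R.1 ω then 1 else 0) :=
      mul_nonneg (density_nonneg h f U ω) (by split_ifs <;> simp)
    simpa [hconf] using single_le_sum (fun R _ => nonneg R) hR
  · simp [density_eq_zero hbins]

open Classical in
lemma sum_prOf_not_codeword_le [Fintype Ω] [Fintype σ] [DecidableEq σ] {p : Ω → ℝ}
    (hp : p ∈ stdSimplex ℝ Ω) (S : Ω → σ) (T : Finset Ω)
    (U : ι → Ω → W) (tasks : Finset (Finset ι × C)) (f : ∀ j, F j) (h : ∀ j, W → F j)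
    (b : ∀ c j, W → B c j) :
    ∑ s with ¬ ∃ ω, IsCodeword T U tasks f h b ω ∧ S ω = s, prOf p S s ≤
      (1 - ∑ ω ∈ T, p ω) + ∑ s, |∑ ω ∈ T with S ω = s, p ω * (density h f U ω - 1)| +
      ∑ ω ∈ T, p ω * ∑ R ∈ tasks,
        density h f U ω * (if Confusable T U h (b R.2) R.1 ω then 1 else 0) := by
  set failure : Ω → ℝ := fun ω => ∑ R ∈ tasks,
    density h f U ω * (if Confusable T U h (b R.2) R.1 ω then 1 else 0)
  have failure_nonneg (ω : Ω) : 0 ≤ failure ω :=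
    sum_nonneg fun R _ => mul_nonneg (density_nonneg h f U ω) (by split_ifs <;> simp)
  let deviation (s : σ) : ℝ := |∑ ω ∈ T with S ω = s, p ω * (density h f U ω - 1)|
  let bound (s : σ) : ℝ := (prOf p S s - ∑ ω ∈ T with S ω = s, p ω) + deviation s +
    ∑ ω ∈ T with S ω = s, p ω * failure ω
  have bound_nonneg (s : σ) : 0 ≤ bound s :=
    add_nonneg (add_nonneg (sub_nonneg.2 (sum_filter_eq_le_prOf hp.1 S T s)) (abs_nonneg _))
      (sum_nonneg fun ω _ => mul_nonneg (hp.1 ω) (failure_nonneg ω))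
  have le_bound (s : σ) (hs : ¬ ∃ ω, IsCodeword T U tasks f h b ω ∧ S ω = s) :
      prOf p S s ≤ bound s := by
    have mass_le : ∑ ω ∈ T with S ω = s, p ω * density h f U ω ≤
        ∑ ω ∈ T with S ω = s, p ω * failure ω := by
      refine sum_le_sum fun ω hω => mul_le_mul_of_nonneg_left ?_ (hp.1 ω)
      obtain ⟨hωT, hωs⟩ := mem_filter.1 hω
      exact density_le_mul_sum_confusable hωT fun hcode => hs ⟨ω, hcode, hωs⟩
    have le_deviation := neg_le_abs (∑ ω ∈ T with S ω = s, p ω * (density h f U ω - 1))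
    simp only [mul_sub, mul_one, sum_sub_distrib] at le_deviation
    simp only [bound, deviation, mul_sub, mul_one, sum_sub_distrib]
    linarith
  calc _ ≤ ∑ s with ¬ ∃ ω, IsCodeword T U tasks f h b ω ∧ S ω = s, bound s :=
        sum_le_sum fun s hs => le_bound s (mem_filter.1 hs).2
    _ ≤ ∑ s, bound s := sum_le_univ_sum_of_nonneg bound_nonneg
    _ = _ := by
        simp only [bound, deviation, failure, sum_add_distrib, sum_sub_distrib, sum_prOf, hp.2,
          sum_fiberwise]

variable [DecidableEq ι] [Fintype W] [DecidableEq W] [∀ j, Nonempty (F j)]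
  [Fintype C] [DecidableEq C] [∀ c j, Fintype (B c j)] [∀ c j, Nonempty (B c j)]

open Classical in
lemma expect_density_mul_confusable (T : Finset Ω) (U : ι → Ω → W) (R : Finset ι × C) (ω : Ω) :
    𝔼 f : ∀ j, F j, 𝔼 h, 𝔼 b : ∀ c j, W → B c j,
        density h f U ω * (if Confusable T U h (b R.2) R.1 ω then 1 else 0) =
      𝔼 h : ∀ j, W → F j, 𝔼 b : ∀ j, W → B R.2 j,
        if Confusable T U h b R.1 ω then 1 else 0 := by
  rw [expect_comm]
  refine expect_congr rfl fun h _ => ?_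
  simp only [← mul_expect, ← expect_mul, expect_bins_density, one_mul]
  exact expect_apply (α := fun c => ∀ j, W → B c j) R.2
    fun b => if Confusable T U h b R.1 ω then (1 : ℝ) else 0

open Classical in
lemma expect_sum_mul_density_confusable_le [Fintype Ω] {p : Ω → ℝ} (hp : p ∈ stdSimplex ℝ Ω)
    {U : ι → Ω → W} {T : Finset Ω} {tasks : Finset (Finset ι × C)}
    {N : Finset ι → Finset ι → ℝ} (hN : ∀ R J, 0 ≤ N R J)
    (hT : ∀ R ∈ tasks, ∀ ω ∈ T, ∀ J ⊆ R.1, J.Nonempty →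
      #((competitors T U R.1 J ω).image (subfamily U J)) ≤ N R.1 J) :
    𝔼 f : ∀ j, F j, 𝔼 h : ∀ j, W → F j, 𝔼 b : ∀ c j, W → B c j, ∑ ω ∈ T, p ω * ∑ R ∈ tasks,
        density h f U ω * (if Confusable T U h (b R.2) R.1 ω then 1 else 0) ≤
      ∑ R ∈ tasks, ∑ J ∈ R.1.powerset with J.Nonempty,
        N R.1 J * ∏ j ∈ J, ((Fintype.card (F j) : ℝ) * Fintype.card (B R.2 j))⁻¹ := by
  set packError := ∑ R ∈ tasks, ∑ J ∈ R.1.powerset with J.Nonempty,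
    N R.1 J * ∏ j ∈ J, ((Fintype.card (F j) : ℝ) * Fintype.card (B R.2 j))⁻¹
  have packError_nonneg : 0 ≤ packError :=
    sum_nonneg fun R _ => sum_nonneg fun J _ => mul_nonneg (hN _ _) (by positivity)
  have pack_one (ω : Ω) (hω : ω ∈ T) : 𝔼 f : ∀ j, F j, 𝔼 h : ∀ j, W → F j,
      𝔼 b : ∀ c j, W → B c j, ∑ R ∈ tasks,
        density h f U ω * (if Confusable T U h (b R.2) R.1 ω then 1 else 0) ≤ packError := by
    simp only [expect_sum_comm, expect_density_mul_confusable]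
    exact sum_le_sum fun R hR => expect_confusable_le (hT R hR ω hω)
  simp only [expect_sum_comm, ← mul_expect] at pack_one ⊢
  calc _ ≤ ∑ ω ∈ T, p ω * packError := sum_le_sum fun ω hω =>
        mul_le_mul_of_nonneg_left (pack_one ω hω) (hp.1 ω)
    _ ≤ packError := by
      rw [← sum_mul]
      refine mul_le_of_le_one_left packError_nonneg ?_
      exact (sum_le_univ_sum_of_nonneg hp.1).trans_eq hp.2

end OneShot

section BinningCode
open Finset

variable {Ω σ W ι C : Type} {F : ι → Type} {B : C → ι → Type} [Fintype ι] [DecidableEq ι]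
  [∀ j, Fintype (F j)] [∀ j, Nonempty (F j)] [Finite W] [DecidableEq W] [Finite C]
  [∀ c j, Fintype (B c j)] [∀ c j, Nonempty (B c j)] [Fintype Ω] [Fintype σ] [DecidableEq σ]

open Classical in
theorem exists_binning_code {p : Ω → ℝ} (hp : p ∈ stdSimplex ℝ Ω) {S : Ω → σ} {U : ι → Ω → W}
    {T : Finset Ω} {tasks : Finset (Finset ι × C)} {τ : Finset ι → ℝ} (hτ : ∀ A, 0 ≤ τ A)
    (hcover : ∀ ω ∈ T, ∀ A, A.Nonempty →
      atomProb p (fun ω => (subfamily U A ω, S ω)) ω ≤ prOf p S (S ω) * τ A)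
    {N : Finset ι → Finset ι → ℝ} (hN : ∀ R J, 0 ≤ N R J)
    (hpack : ∀ R ∈ tasks, ∀ ω ∈ T, ∀ J ⊆ R.1, J.Nonempty →
      #((competitors T U R.1 J ω).image (subfamily U J)) ≤ N R.1 J) :
    ∃ (f : ∀ j, F j) (h : ∀ j, W → F j) (b : ∀ c j, W → B c j),
      ∑ s with ¬ ∃ ω, IsCodeword T U tasks f h b ω ∧ S ω = s, prOf p S s ≤
        (1 - ∑ ω ∈ T, p ω) +
        √(∑ A with A.Nonempty, (∏ j ∈ A, ((Fintype.card (F j) : ℝ) - 1)) * τ A) +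
        ∑ R ∈ tasks, ∑ J ∈ R.1.powerset with J.Nonempty,
          N R.1 J * ∏ j ∈ J, ((Fintype.card (F j) : ℝ) * Fintype.card (B R.2 j))⁻¹ := by
  have := Fintype.ofFinite W
  have := Fintype.ofFinite C
  set coverError := √(∑ A with A.Nonempty, (∏ j ∈ A, ((Fintype.card (F j) : ℝ) - 1)) * τ A)
  have cover : 𝔼 f : ∀ j, F j, 𝔼 h : ∀ j, W → F j,
      ∑ s, |∑ ω ∈ T with S ω = s, p ω * (density h f U ω - 1)| ≤ coverError := by
    refine expect_le univ_nonempty fun f _ => ?_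
    calc _ ≤ ∑ s, prOf p S s * coverError := by
          rw [expect_sum_comm]
          exact sum_le_sum fun s _ => expect_abs_sum_density_sub_one_le hp.1 hτ hcover f s
      _ = coverError := by rw [← sum_mul, sum_prOf, hp.2, one_mul]
  have average : 𝔼 f : ∀ j, F j, 𝔼 h : ∀ j, W → F j, 𝔼 b : ∀ c j, W → B c j,
      ∑ s with ¬ ∃ ω, IsCodeword T U tasks f h b ω ∧ S ω = s, prOf p S s ≤
        (1 - ∑ ω ∈ T, p ω) + coverError + ∑ R ∈ tasks, ∑ J ∈ R.1.powerset with J.Nonempty,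
          N R.1 J * ∏ j ∈ J, ((Fintype.card (F j) : ℝ) * Fintype.card (B R.2 j))⁻¹ := by
    refine (expect_le_expect fun f _ => expect_le_expect fun h _ => expect_le_expect fun b _ =>
      sum_prOf_not_codeword_le hp S T U tasks f h b).trans ?_
    simp only [expect_add_distrib, Fintype.expect_const]
    gcongr
    exact expect_sum_mul_density_confusable_le hp hN hpack
  obtain ⟨f, -, hf⟩ := exists_le_of_expect_le univ_nonempty average
  obtain ⟨h, -, hh⟩ := exists_le_of_expect_le univ_nonempty hf
  obtain ⟨b, -, hb⟩ := exists_le_of_expect_le univ_nonempty hh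
  exact ⟨f, h, b, hb⟩

end BinningCode

section Typicality
open Finset Filter
open scoped Topology

variable {Ω γ δ : Type} [Fintype Ω] [DecidableEq γ] [DecidableEq δ] {p : Ω → ℝ}

lemma card_image_mul_le_prOf (hp : ∀ ω, 0 ≤ p ω) {X : Ω → γ} {Y : Ω → δ} {V : Finset Ω} {y : δ}
    {m : ℝ} (hY : ∀ ω ∈ V, Y ω = y) (hm : ∀ ω ∈ V, m ≤ atomProb p (fun ω => (X ω, Y ω)) ω) :
    #(V.image X) * m ≤ prOf p Y y := by
  calc #(V.image X) * m = ∑ _x ∈ V.image X, m := by rw [sum_const, nsmul_eq_mul]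
    _ ≤ ∑ x ∈ V.image X, prOf p (fun ω => (X ω, Y ω)) (x, y) := by
        refine sum_le_sum fun x hx => ?_
        obtain ⟨ω, hω, rfl⟩ := mem_image.1 hx
        exact hY ω hω ▸ hm ω hω
    _ = ∑ ω with X ω ∈ V.image X, if Y ω = y then p ω else 0 := by
        simp only [prOf, Prod.mk.injEq, ite_and]
        rw [sum_comm, sum_filter]
        simp
    _ ≤ prOf p Y y := sum_le_univ_sum_of_nonneg fun ω => by split_ifs <;> simp [hp ω]

variable [Fintype γ]

/-- The empirical entropy of `X` along the outcomes `ω`, all of which have positive probability, is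
within `d` of the entropy of `X`. -/
def IsTypical (p : Ω → ℝ) (X : Ω → γ) (d : ℝ) {n : ℕ} (ω : Fin n → Ω) : Prop :=
  (∀ k, p (ω k) ≠ 0) ∧ |∑ k, -Real.logb 2 (atomProb p X (ω k)) - n * ent p X| < n * d

namespace IsTypical

variable {X : Ω → γ} {d : ℝ} {n : ℕ} {ω : Fin n → Ω}

lemma atomProb_iid_eq (hp : ∀ ω, 0 ≤ p ω) (hω : IsTypical p X d ω) :
    atomProb (iid p n) (fun ω k => X (ω k)) ω =
      2 ^ (-∑ k, -Real.logb 2 (atomProb p X (ω k))) := by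
  have pos (k : Fin n) : 0 < atomProb p X (ω k) :=
    ((hp _).lt_of_ne' (hω.1 k)).trans_le (le_atomProb hp X _)
  rw [atomProb_iid, sum_neg_distrib, neg_neg, Real.rpow_sum_of_pos two_pos]
  exact prod_congr rfl fun k _ => (Real.rpow_logb two_pos (by norm_num) (pos k)).symm

lemma le_atomProb_iid (hp : ∀ ω, 0 ≤ p ω) (hω : IsTypical p X d ω) :
    (2 : ℝ) ^ (-(n * (ent p X + d))) ≤ atomProb (iid p n) (fun ω k => X (ω k)) ω := by
  rw [hω.atomProb_iid_eq hp]
  gcongr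
  · norm_num
  · linarith [(abs_lt.1 hω.2).2]

lemma atomProb_iid_le (hp : ∀ ω, 0 ≤ p ω) (hω : IsTypical p X d ω) :
    atomProb (iid p n) (fun ω k => X (ω k)) ω ≤ (2 : ℝ) ^ (-(n * (ent p X - d))) := by
  rw [hω.atomProb_iid_eq hp]
  gcongr
  · norm_num
  · linarith [(abs_lt.1 hω.2).1]

end IsTypical

open Classical in
lemma tendsto_sum_iid_not_isTypical (hp : p ∈ stdSimplex ℝ Ω) (X : Ω → γ) {d : ℝ} (hd : 0 < d) :
    Tendsto (fun n : ℕ => ∑ ω : Fin n → Ω with ¬ IsTypical p X d ω, iid p n ω) atTop (𝓝 0) := by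
  refine squeeze_zero (fun n => sum_nonneg fun ω _ => (iid_mem_stdSimplex hp n).1 ω) (fun n => ?_)
    (tendsto_sum_iid_le_abs_sum_sub hp (fun ω => -Real.logb 2 (atomProb p X ω)) hd)
  simp only [← ent_eq_sum_atomProb, sum_filter]
  refine sum_le_sum fun ω _ => ?_
  by_cases hpos : ∀ k, p (ω k) ≠ 0
  · simp [IsTypical, hpos]
  · have : iid p n ω = 0 := by simpa [iid, prod_eq_zero_iff] using hpos
    simp [this]

end Typicality

section JointTypicality
open Finset Filter
open scoped Topology

variable {Ω σ W ι : Type} {p : Ω → ℝ} {U : ι → Ω → W} {S : Ω → σ} {d : ℝ} {n : ℕ} {ω : Fin n → Ω}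

lemma subfamily_iid_eq_iff {A : Finset ι} {ω' : Fin n → Ω} :
    subfamily (fun j (ω : Fin n → Ω) k => U j (ω k)) A ω =
        subfamily (fun j (ω : Fin n → Ω) k => U j (ω k)) A ω' ↔
      (fun k => subfamily U A (ω k)) = fun k => subfamily U A (ω' k) := by
  rw [subfamily_eq_iff, funext_iff]
  simp only [subfamily_eq_iff, funext_iff (α := Fin n)]
  exact ⟨fun h k j hj => h j hj k, fun h j hj k => h k j hj⟩

variable [Fintype Ω] [DecidableEq σ] [DecidableEq W]

lemma atomProb_subfamily_iid (A : Finset ι) :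
    atomProb (iid p n) (subfamily (fun j (ω : Fin n → Ω) k => U j (ω k)) A) ω =
      atomProb (iid p n) (fun ω k => subfamily U A (ω k)) ω :=
  atomProb_congr fun _ => subfamily_iid_eq_iff

lemma atomProb_subfamily_prodMk_iid (A : Finset ι) :
    atomProb (iid p n) (fun ω => (subfamily (fun j (ω : Fin n → Ω) k => U j (ω k)) A ω,
        fun k => S (ω k))) ω =
      atomProb (iid p n) (fun ω k => (subfamily U A (ω k), S (ω k))) ω :=
  atomProb_congr fun _ => by
    rw [Prod.mk.injEq, subfamily_iid_eq_iff]
    simp only [funext_iff (α := Fin n), Prod.mk.injEq, forall_and]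

variable [Fintype σ] [Fintype W] [DecidableEq ι]

open Classical in
/-- The outcome sequences that are typical for `S`, for every subfamily of `U`, and for every
subfamily of `U` together with `S`. -/
noncomputable def jointlyTypical (p : Ω → ℝ) (U : ι → Ω → W) (S : Ω → σ) (d : ℝ) (n : ℕ) :
    Finset (Fin n → Ω) :=
  {ω | IsTypical p S d ω ∧ ∀ A : Finset ι, IsTypical p (subfamily U A) d ω ∧
    IsTypical p (fun ω => (subfamily U A ω, S ω)) d ω}

lemma mem_jointlyTypical : ω ∈ jointlyTypical p U S d n ↔
    IsTypical p S d ω ∧ ∀ A : Finset ι, IsTypical p (subfamily U A) d ω ∧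
      IsTypical p (fun ω => (subfamily U A ω, S ω)) d ω := by
  simp [jointlyTypical]

lemma atomProb_le_of_mem_jointlyTypical (hp : ∀ ω, 0 ≤ p ω) (hω : ω ∈ jointlyTypical p U S d n)
    (A : Finset ι) :
    atomProb (iid p n) (fun ω => (subfamily (fun j (ω : Fin n → Ω) k => U j (ω k)) A ω,
        fun k => S (ω k))) ω ≤
      prOf (iid p n) (fun ω k => S (ω k)) (fun k => S (ω k)) *
        2 ^ (-(n * (ent p (fun ω => (subfamily U A ω, S ω)) - ent p S - 2 * d))) := by
  obtain ⟨hS, hA⟩ := mem_jointlyTypical.1 hω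
  calc _ ≤ (2 : ℝ) ^ (-(n * (ent p (fun ω => (subfamily U A ω, S ω)) - d))) := by
        rw [atomProb_subfamily_prodMk_iid]
        exact (hA A).2.atomProb_iid_le hp
    _ = 2 ^ (-(n * (ent p S + d))) *
        2 ^ (-(n * (ent p (fun ω => (subfamily U A ω, S ω)) - ent p S - 2 * d))) := by
        rw [← Real.rpow_add two_pos]
        ring_nf
    _ ≤ _ := by
        gcongr
        exact hS.le_atomProb_iid hp

lemma card_image_competitors_jointlyTypical_le (hp : p ∈ stdSimplex ℝ Ω)
    (hω : ω ∈ jointlyTypical p U S d n) {R J : Finset ι} (hJ : J ⊆ R) :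
    (#((competitors (jointlyTypical p U S d n) (fun j (ω : Fin n → Ω) k => U j (ω k)) R J ω).image
        (subfamily (fun j (ω : Fin n → Ω) k => U j (ω k)) J)) : ℝ) ≤
      2 ^ (n * (ent p (subfamily U R) - ent p (subfamily U (R \ J)) + 2 * d)) := by
  set Uₙ := fun j (ω : Fin n → Ω) k => U j (ω k)
  set V := competitors (jointlyTypical p U S d n) Uₙ R J ω
  have agree (ω') (hω' : ω' ∈ V) : subfamily Uₙ (R \ J) ω' = subfamily Uₙ (R \ J) ω :=
    subfamily_eq_iff.2 (mem_competitors.1 hω').2.1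
  have atom_ge (ω') (hω' : ω' ∈ V) : (2 : ℝ) ^ (-(n * (ent p (subfamily U R) + d))) ≤
      atomProb (iid p n) (fun ω => (subfamily Uₙ J ω, subfamily Uₙ (R \ J) ω)) ω' := by
    have split : atomProb (iid p n) (fun ω => (subfamily Uₙ J ω, subfamily Uₙ (R \ J) ω)) ω' =
        atomProb (iid p n) (subfamily Uₙ R) ω' := atomProb_congr fun ω'' => by
      simp only [Prod.mk.injEq, subfamily_eq_iff, ← forall_mem_union, union_sdiff_of_subset hJ]
    rw [split, atomProb_subfamily_iid]
    exact ((mem_jointlyTypical.1 (mem_competitors.1 hω').1).2 R).1.le_atomProb_iid hp.1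
  have count := (card_image_mul_le_prOf (iid_mem_stdSimplex hp n).1 agree atom_ge).trans
    (((atomProb_subfamily_iid _).le.trans
      (((mem_jointlyTypical.1 hω).2 (R \ J)).1.atomProb_iid_le hp.1)))
  rw [← le_div_iff₀ (by positivity), ← Real.rpow_sub two_pos] at count
  exact count.trans_eq (by congr 1; ring)

lemma tendsto_one_sub_sum_jointlyTypical [Finite ι] (hp : p ∈ stdSimplex ℝ Ω) (U : ι → Ω → W)
    (S : Ω → σ) (hd : 0 < d) :
    Tendsto (fun n => 1 - ∑ ω ∈ jointlyTypical p U S d n, iid p n ω) atTop (𝓝 0) := by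
  classical
  have := Fintype.ofFinite ι
  have total := (tendsto_sum_iid_not_isTypical hp S hd).add <| tendsto_finsetSum univ
    fun A _ => (tendsto_sum_iid_not_isTypical hp (subfamily U A) hd).add
      (tendsto_sum_iid_not_isTypical hp (fun ω => (subfamily U A ω, S ω)) hd)
  simp only [add_zero, sum_const_zero] at total
  refine squeeze_zero (fun n => ?_) (fun n => ?_) total
  · rw [sub_nonneg, ← (iid_mem_stdSimplex hp n).2]
    exact sum_le_univ_sum_of_nonneg (iid_mem_stdSimplex hp n).1
  · have nonneg := (iid_mem_stdSimplex hp n).1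
    have union_bound (ω : Fin n → Ω) : (if ω ∈ (jointlyTypical p U S d n)ᶜ then iid p n ω else 0) ≤
        (if ¬ IsTypical p S d ω then iid p n ω else 0) +
          ∑ A : Finset ι, ((if ¬ IsTypical p (subfamily U A) d ω then iid p n ω else 0) +
            if ¬ IsTypical p (fun ω => (subfamily U A ω, S ω)) d ω then iid p n ω else 0) := by
      have loss_nonneg (A : Finset ι) :
          0 ≤ (if ¬ IsTypical p (subfamily U A) d ω then iid p n ω else 0) +
            if ¬ IsTypical p (fun ω => (subfamily U A ω, S ω)) d ω then iid p n ω else 0 := by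
        have := nonneg ω
        positivity
      have loss_le (A : Finset ι) := single_le_sum (fun A _ => loss_nonneg A) (mem_univ A)
      have := sum_nonneg fun A (_ : A ∈ univ) => loss_nonneg A
      have := nonneg ω
      by_cases hS : IsTypical p S d ω
      · by_cases hA : ∃ A : Finset ι, ¬ (IsTypical p (subfamily U A) d ω ∧
          IsTypical p (fun ω => (subfamily U A ω, S ω)) d ω)
        · obtain ⟨A, hA⟩ := hA
          have := loss_le A
          grind
        · push Not at hA
          simp [mem_jointlyTypical, hS, hA]
      · grind
    calc _ = ∑ ω, if ω ∈ (jointlyTypical p U S d n)ᶜ then iid p n ω else 0 := by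
          rw [← (iid_mem_stdSimplex hp n).2, ← sum_compl_add_sum (jointlyTypical p U S d n),
            add_sub_cancel_right, sum_ite_mem, univ_inter]
      _ ≤ _ := sum_le_sum fun ω _ => union_bound ω
      _ = _ := by
          rw [sum_add_distrib, sum_comm]
          simp only [sum_add_distrib, sum_filter]

end JointTypicality

section AsymptoticCode
open Finset Filter
open scoped Topology

lemma two_pow_floor_sub_one_le (x : ℝ) : (2 : ℝ) ^ ⌊x⌋₊ - 1 ≤ 2 ^ x := by
  rcases le_or_gt 0 x with hx | hx
  · rw [← Real.rpow_natCast]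
    have : (2 : ℝ) ^ (⌊x⌋₊ : ℝ) ≤ 2 ^ x := by
      gcongr
      exacts [by norm_num, Nat.floor_le hx]
    linarith
  · simp [Nat.floor_of_nonpos hx.le, Real.rpow_nonneg]

lemma inv_two_pow_floor_mul_two_pow_ceil_le (x y : ℝ) :
    ((2 : ℝ) ^ ⌊x⌋₊ * 2 ^ ⌈y⌉₊)⁻¹ ≤ 2 ^ (1 - x - y) := by
  rw [← pow_add, ← Real.rpow_natCast, ← Real.rpow_neg zero_le_two]
  gcongr
  · norm_num
  · push_cast
    linarith [Nat.sub_one_lt_floor x, Nat.le_ceil y]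

variable {ι : Type} {n : ℕ} {d : ℝ} {A : Finset ι} {x y : ι → ℝ} {H : ℝ}

lemma card_mul_le_mul_card {a b : ℝ} (hab : a ≤ b) (hb : 0 ≤ b) (hA : A.Nonempty) : a ≤ #A * b :=
  hab.trans (le_mul_of_one_le_left hb (by exact_mod_cast hA.card_pos))

lemma prod_two_pow_floor_sub_one_mul_le (hA : A.Nonempty) (hd : 0 ≤ d) (hx : ∑ j ∈ A, x j ≤ H) :
    (∏ j ∈ A, ((2 : ℝ) ^ ⌊n * (x j - 3 * d)⌋₊ - 1)) * 2 ^ (-(n * (H - 2 * d))) ≤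
      2 ^ (-(n * d)) := by
  have three_le : 3 * (n * d) ≤ #A * (3 * (n * d)) :=
    card_mul_le_mul_card le_rfl (by positivity) hA
  calc _ ≤ (∏ j ∈ A, (2 : ℝ) ^ (n * (x j - 3 * d))) * 2 ^ (-(n * (H - 2 * d))) := by
        gcongr
        exacts [fun _ _ => sub_nonneg.2 (one_le_pow₀ one_le_two), two_pow_floor_sub_one_le _]
    _ ≤ _ := by
        rw [← Real.rpow_sum_of_pos two_pos, ← Real.rpow_add two_pos, ← mul_sum, sum_sub_distrib,
          sum_const, nsmul_eq_mul]
        gcongr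
        · norm_num
        · linarith [mul_le_mul_of_nonneg_left hx n.cast_nonneg]

lemma mul_prod_inv_two_pow_floor_mul_le (hA : A.Nonempty) (hnd : 1 ≤ n * d)
    (hxy : H ≤ ∑ j ∈ A, (x j + y j)) :
    (2 : ℝ) ^ (n * (H + 2 * d)) *
        ∏ j ∈ A, ((2 : ℝ) ^ ⌊n * (x j - 3 * d)⌋₊ * 2 ^ ⌈n * (y j + 7 * d)⌉₊)⁻¹ ≤
      2 ^ (-(n * d)) := by
  have three_le : 3 * (n * d) ≤ #A * (4 * (n * d) - 1) :=
    card_mul_le_mul_card (by linarith) (by linarith) hA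
  calc _ ≤ (2 : ℝ) ^ (n * (H + 2 * d)) *
        ∏ j ∈ A, (2 : ℝ) ^ (1 - n * (x j - 3 * d) - n * (y j + 7 * d)) := by
        gcongr
        exact inv_two_pow_floor_mul_two_pow_ceil_le _ _
    _ = (2 : ℝ) ^ (n * (H + 2 * d) + (-(n * ∑ j ∈ A, (x j + y j)) - #A * (4 * (n * d) - 1))) := by
        have exponent (j : ι) : 1 - n * (x j - 3 * d) - n * (y j + 7 * d) =
            -(n * (x j + y j)) - (4 * (n * d) - 1) := by ring
        simp only [exponent]
        rw [← Real.rpow_sum_of_pos two_pos, ← Real.rpow_add two_pos, sum_sub_distrib,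
          sum_neg_distrib, ← mul_sum, sum_const, nsmul_eq_mul]
    _ ≤ _ := by
        gcongr
        · norm_num
        · linarith [mul_le_mul_of_nonneg_left hxy n.cast_nonneg]

lemma tendsto_two_rpow_neg_mul (hd : 0 < d) :
    Tendsto (fun n : ℕ => (2 : ℝ) ^ (-(n * d))) atTop (𝓝 0) := by
  have : Tendsto (fun n : ℕ => -(n * d)) atTop atBot :=
    tendsto_neg_atTop_atBot.comp (tendsto_natCast_atTop_atTop.atTop_mul_const hd)
  exact (tendsto_rpow_atBot_of_base_gt_one 2 one_lt_two).comp this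

variable {Ω σ W C : Type} [Fintype Ω] [Fintype σ] [DecidableEq σ] [Fintype W] [DecidableEq W]
  [DecidableEq ι] [Finite C] {p : Ω → ℝ} {U : ι → Ω → W} {S : Ω → σ}
  {tasks : Finset (Finset ι × C)} {γ : ι → ℝ} {ρ : C → ι → ℝ}

/-- The covering condition on the rates `γ` at which the labels `U` quantize the source `S`. -/
def Covers (p : Ω → ℝ) (U : ι → Ω → W) (S : Ω → σ) (γ : ι → ℝ) : Prop :=
  ∀ A : Finset ι, ∑ j ∈ A, ent p (U j) - (ent p (fun ω => (subfamily U A ω, S ω)) - ent p S) ≤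
    ∑ j ∈ A, γ j

/-- The packing condition under which the labels in `R`, quantized at the rates `γ`, are recovered
from bin indices of rates `ρ`. -/
def Packs (p : Ω → ℝ) (U : ι → Ω → W) (R : Finset ι) (ρ γ : ι → ℝ) : Prop :=
  ∀ J ⊆ R, ∑ j ∈ J, (γ j - ρ j) ≤
    ∑ j ∈ J, ent p (U j) - (ent p (subfamily U R) - ent p (subfamily U (R \ J)))

open Classical in
lemma exists_binning_code_jointlyTypical [Fintype ι] (hp : p ∈ stdSimplex ℝ Ω)
    (hcover : Covers p U S γ) (hpack : ∀ R ∈ tasks, Packs p U R.1 (ρ R.2) γ)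
    (hd : 0 ≤ d) (hnd : 1 ≤ n * d) :
    ∃ (r : ι → ℕ) (f : ∀ j, Fin (r j) → ZMod 2) (h : ∀ j, (Fin n → W) → Fin (r j) → ZMod 2)
      (b : ∀ c j, (Fin n → W) → Fin ⌈n * (ρ c j + 7 * d)⌉₊ → ZMod 2),
      ∑ s with ¬ ∃ ω, IsCodeword (jointlyTypical p U S d n) (fun j ω k => U j (ω k)) tasks f h b ω ∧
        (fun k => S (ω k)) = s, prOf (iid p n) (fun ω k => S (ω k)) s ≤
        (1 - ∑ ω ∈ jointlyTypical p U S d n, iid p n ω) +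
          √(Fintype.card (Finset ι) * 2 ^ (-(n * d))) +
          #tasks * (Fintype.card (Finset ι) * 2 ^ (-(n * d))) := by
  obtain ⟨f, h, b, hcode⟩ := exists_binning_code
    (F := fun j => Fin ⌊n * (ent p (U j) - γ j - 3 * d)⌋₊ → ZMod 2)
    (B := fun c j => Fin ⌈n * (ρ c j + 7 * d)⌉₊ → ZMod 2)
    (τ := fun A => 2 ^ (-(n * (ent p (fun ω => (subfamily U A ω, S ω)) - ent p S - 2 * d))))
    (N := fun R J => 2 ^ (n * (ent p (subfamily U R) - ent p (subfamily U (R \ J)) + 2 * d)))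
    (iid_mem_stdSimplex hp n) (fun A => by positivity)
    (fun ω hω A _ => atomProb_le_of_mem_jointlyTypical hp.1 hω A) (fun R J => by positivity)
    (fun R _ ω hω J hJ _ => card_image_competitors_jointlyTypical_le hp hω hJ)
  refine ⟨_, f, h, b, hcode.trans ?_⟩
  simp only [Fintype.card_pi_const, ZMod.card, Nat.cast_pow, Nat.cast_ofNat]
  gcongr
  · refine (sum_le_card_nsmul _ _ _ fun A hA => prod_two_pow_floor_sub_one_mul_le
      (mem_filter.1 hA).2 hd ?_).trans ?_
    · rw [sum_sub_distrib]
      linarith [hcover A]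
    · rw [nsmul_eq_mul]
      gcongr
      exact card_le_univ _
  · rw [← nsmul_eq_mul #tasks]
    refine sum_le_card_nsmul _ _ _ fun R hR => (sum_le_card_nsmul _ _ _ fun J hJ =>
      mul_prod_inv_two_pow_floor_mul_le (mem_filter.1 hJ).2 hnd ?_).trans ?_
    · have := hpack R hR J (mem_powerset.1 (mem_filter.1 hJ).1)
      simp only [sum_sub_distrib, sum_add_distrib] at this ⊢
      linarith
    · rw [nsmul_eq_mul]
      gcongr
      exact card_le_univ _

/-- On the sequences of sample points in `K`, the bins `b j` of the labels with indices in `R`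
determine these labels. -/
def BinsDetermine {n : ℕ} {B : ι → Type} (U : ι → Ω → W) (K : Finset (Fin n → Ω))
    (b : ∀ j, (Fin n → W) → B j) (R : Finset ι) : Prop :=
  ∀ ω ∈ K, ∀ ω' ∈ K, (∀ j ∈ R, b j (fun k => U j (ω' k)) = b j (fun k => U j (ω k))) →
    ∀ j ∈ R, ∀ k, U j (ω' k) = U j (ω k)

open Classical in
theorem eventually_exists_binning_code [Finite ι] (hp : p ∈ stdSimplex ℝ Ω)
    (hρ : ∀ c j, 0 ≤ ρ c j)
    (hcover : Covers p U S γ) (hpack : ∀ R ∈ tasks, Packs p U R.1 (ρ R.2) γ)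
    {δ ε : ℝ} (hδ : 0 < δ) (hε : 0 < ε) :
    ∀ᶠ n : ℕ in atTop, ∃ (l : C → ι → ℕ) (b : ∀ c j, (Fin n → W) → Fin (l c j) → ZMod 2)
      (K : Finset (Fin n → Ω)), (∀ c j, l c j ≤ n * (ρ c j + δ)) ∧ (∀ ω ∈ K, ∀ k, p (ω k) ≠ 0) ∧
      (∀ R ∈ tasks, BinsDetermine U K (b R.2) R.1) ∧
      ∑ s ∈ (K.image fun ω k => S (ω k))ᶜ, prOf (iid p n) (fun ω k => S (ω k)) s ≤ ε := by
  have := Fintype.ofFinite ι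
  set d := δ / 8 with d_def
  have hd : 0 < d := by positivity
  have error_tendsto := ((tendsto_one_sub_sum_jointlyTypical hp U S hd).add
    ((tendsto_two_rpow_neg_mul hd).const_mul (Fintype.card (Finset ι) : ℝ)).sqrt).add
    (((tendsto_two_rpow_neg_mul hd).const_mul (Fintype.card (Finset ι) : ℝ)).const_mul
      (#tasks : ℝ))
  simp only [mul_zero, Real.sqrt_zero, add_zero] at error_tendsto
  filter_upwards [error_tendsto.eventually_le_const hε,
    (tendsto_natCast_atTop_atTop.atTop_mul_const hd).eventually_ge_atTop 1] with n hn hnd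
  obtain ⟨r, f, h, b, hb⟩ := exists_binning_code_jointlyTypical hp hcover hpack hd.le hnd
  set K : Finset (Fin n → Ω) :=
    {ω | IsCodeword (jointlyTypical p U S d n) (fun j ω k => U j (ω k)) tasks f h b ω}
  refine ⟨_, b, K, fun c j => ?_, fun ω hω => ?_, fun R hR ω hω ω' hω' hagree j hj => ?_,
    le_trans (le_of_eq ?_) (hb.trans hn)⟩
  · have := hρ c j
    have expand : n * (ρ c j + δ) = n * (ρ c j + 7 * d) + n * d := by rw [d_def]; ring
    linarith [Nat.ceil_lt_add_one (show 0 ≤ n * (ρ c j + 7 * d) by positivity)]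
  · exact (mem_jointlyTypical.1 (mem_filter.1 hω).2.1).1.1
  · have := (mem_filter.1 hω).2.subfamily_eq (mem_filter.1 hω').2 hR hagree
    exact congrFun (subfamily_eq_iff.1 this j hj)
  · refine sum_congr ?_ fun _ _ => rfl
    ext s
    simp [K]

end AsymptoticCode

section Region
open Finset

variable {Ω W σ : Type} [Fintype Ω] [Fintype W] [DecidableEq W] [Fintype σ] [DecidableEq σ]
  {p : Ω → ℝ} {S : Ω → σ}

lemma ent_subfamily_comp_embedding {ι κ : Type} [DecidableEq ι] [DecidableEq κ] (U : κ → Ω → W)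
    (e : ι ↪ κ) (A : Finset ι) :
    ent p (subfamily (U ∘ e) A) = ent p (subfamily U (A.map e)) :=
  ent_congr fun ω ω' => by simp [subfamily_eq_iff]

lemma Packs.map {ι κ : Type} [DecidableEq ι] [DecidableEq κ] {U : κ → Ω → W} {R : Finset ι}
    {ρ γ : κ → ℝ} {e : ι ↪ κ} (h : Packs p (U ∘ e) R (ρ ∘ e) (γ ∘ e)) :
    Packs p U (R.map e) ρ γ := by
  intro J hJ
  obtain ⟨J, hJR, rfl⟩ := subset_map_iff.1 hJ
  rw [← Finset.map_sdiff]
  simpa only [sum_map, Function.comp_apply, ← ent_subfamily_comp_embedding] using h J hJR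

variable {M : ℕ} {U : Fin M → Ω → W} {recs : Finset (Finset (Fin M))} {R R' : Fin M → ℝ}

lemma RstarMD.covers (h : RstarMD p S U recs R R') : Covers p U S R' := h.2.1

lemma RstarMD.packs (h : RstarMD p S U recs R R') {B : Finset (Fin M)} (hB : B ∈ recs) :
    Packs p U B R R' := by
  intro J hJ
  have := h.2.2 B hB J hJ
  rwa [cjEnt, union_sdiff_of_subset hJ] at this

end Region

section BlockCode
open Finset Filter

variable {t : ℕ}

/-- The labels a user receives when one database answers query `q₁` with `X₀` and `X₁` or `X₂`, and
the other one answers query `q₂` with `Y₁` or `Y₂`. The two queries ask for message `q₁ + q₂`. -/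
def recoverySet (q₁ q₂ : Fin 2) : Finset (Fin 5) := {0, ![1, 2] q₁, ![3, 4] q₂}

/-- The labels stored at the same database as label `i`: either all of `X₀, X₁, X₂`, or both
of `Y₁, Y₂`. -/
def storageGroup : Fin 5 → Finset (Fin 5) :=
  ![{0, 1, 2}, {0, 1, 2}, {0, 1, 2}, {3, 4}, {3, 4}]

lemma recoverySet_mem_recs5 : ∀ q₁ q₂, recoverySet q₁ q₂ ∈ recs5 := by decide

lemma self_mem_storageGroup : ∀ i, i ∈ storageGroup i := by decide

lemma storageGroup_eq_of_mem : ∀ {i j}, j ∈ storageGroup i → storageGroup j = storageGroup i := by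
  decide

/-- A code for a block of `n` pairs of length-`t` messages, consisting of the five labels
`X₀, X₁, X₂, Y₁, Y₂`: label `i` is stored as `stored i` and sent to the user as `sent i`. It works
on the blocks in `good`. -/
structure BlockCode (t n : ℕ) where
  storedLen : Fin 5 → ℕ
  sentLen : Fin 5 → ℕ
  stored : ∀ i, (Fin n → Msg t × Msg t) → Fin (storedLen i) → ZMod 2
  sent : ∀ i, (Fin n → Msg t × Msg t) → Fin (sentLen i) → ZMod 2
  good : Finset (Fin n → Msg t × Msg t)
  sent_eq : ∀ i, ∀ s ∈ good, ∀ s' ∈ good,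
    (∀ j ∈ storageGroup i, stored j s = stored j s') → sent i s = sent i s'
  target_eq : ∀ q₁ q₂, ∀ s ∈ good, ∀ s' ∈ good,
    (∀ i ∈ recoverySet q₁ q₂, sent i s = sent i s') →
    ∀ k, target (q₁ + q₂) (s k) = target (q₁ + q₂) (s' k)

variable {S : RVSetup t} {α β γ : Fin 5 → ℝ}

lemma target_eq_of_recoverySet {f11 f12 f21 f22 : S.γ × S.γ × S.γ → Msg t}
    (decode : ∀ ω, S.p ω ≠ 0 →
      (S.V ω).1 = f11 (S.X 0 ω, S.X 1 ω, S.X 3 ω) ∧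
      (S.V ω).1 = f22 (S.X 0 ω, S.X 2 ω, S.X 4 ω) ∧
      (S.V ω).2 = f12 (S.X 0 ω, S.X 1 ω, S.X 4 ω) ∧
      (S.V ω).2 = f21 (S.X 0 ω, S.X 2 ω, S.X 3 ω))
    {ω ω' : S.Ω} (hω : S.p ω ≠ 0) (hω' : S.p ω' ≠ 0) {q₁ q₂ : Fin 2}
    (h : ∀ i ∈ recoverySet q₁ q₂, S.X i ω = S.X i ω') :
    target (q₁ + q₂) (S.V ω) = target (q₁ + q₂) (S.V ω') := by
  have := decode ω hω
  have := decode ω' hω'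
  simp only [recoverySet, mem_insert, mem_singleton, forall_eq_or_imp, forall_eq] at h
  fin_cases q₁ <;> fin_cases q₂ <;> simp_all [target]

lemma RstarMD.packs_map_univ {Ω W σ : Type} [Fintype Ω] [Fintype W] [DecidableEq W] [Fintype σ]
    [DecidableEq σ] {p : Ω → ℝ} {V : Ω → σ} {ι : Type} [DecidableEq ι] {M : ℕ} {U : ι → Ω → W}
    {ρ γ : ι → ℝ} {e : Fin M ↪ ι} (h : RstarMD p V (U ∘ e) {univ} (ρ ∘ e) (γ ∘ e)) :
    Packs p U (univ.map e) ρ γ :=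
  (h.packs (mem_singleton_self univ)).map

lemma packs_X_of_RstarMD
    (h : RstarMD S.p S.V ![S.X 0, S.X 1, S.X 2] {univ} ![α 0, α 1, α 2] ![γ 0, γ 1, γ 2]) :
    Packs S.p S.X {0, 1, 2} α γ := by
  refine RstarMD.packs_map_univ (V := S.V) (e := ⟨![0, 1, 2], by decide⟩) ?_
  convert h using 1 <;> ext i <;> fin_cases i <;> rfl

lemma packs_Y_of_RstarMD
    (h : RstarMD S.p S.V ![S.X 3, S.X 4] {univ} ![α 3, α 4] ![γ 3, γ 4]) :
    Packs S.p S.X {3, 4} α γ := by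
  refine RstarMD.packs_map_univ (V := S.V) (e := ⟨![3, 4], by decide⟩) ?_
  convert h using 1 <;> ext i <;> fin_cases i <;> rfl

lemma exists_blockCode_of_binsDetermine {n : ℕ} {l : Fin 2 → Fin 5 → ℕ}
    {b : ∀ c i, (Fin n → S.γ) → Fin (l c i) → ZMod 2} {K : Finset (Fin n → S.Ω)}
    {layer : Fin 5 → Fin 2} (hsupp : ∀ ω ∈ K, ∀ k, S.p (ω k) ≠ 0)
    (hsent : ∀ q₁ q₂, BinsDetermine S.X K (b 0) (recoverySet q₁ q₂))
    (hstored : ∀ i, layer i = 0 ∨ (∀ j ∈ storageGroup i, layer j = 1) ∧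
      BinsDetermine S.X K (b 1) (storageGroup i))
    (htarget : ∀ ω ω', S.p ω ≠ 0 → S.p ω' ≠ 0 → ∀ q₁ q₂,
      (∀ i ∈ recoverySet q₁ q₂, S.X i ω = S.X i ω') →
      target (q₁ + q₂) (S.V ω) = target (q₁ + q₂) (S.V ω')) :
    ∃ B : BlockCode t n, (∀ i, B.storedLen i = l (layer i) i) ∧ (∀ i, B.sentLen i = l 0 i) ∧
      B.good = K.image fun ω k => S.V (ω k) := by
  have : Nonempty S.Ω := by
    by_contra h
    simpa [not_nonempty_iff.1 h] using S.p_sum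
  choose! enc enc_mem V_enc using
    fun s (hs : s ∈ K.image fun ω k => S.V (ω k)) => mem_image.1 hs
  refine ⟨{
    storedLen i := l (layer i) i
    sentLen := l 0
    stored i s := b (layer i) i fun k => S.X i (enc s k)
    sent i s := b 0 i fun k => S.X i (enc s k)
    good := K.image fun ω k => S.V (ω k)
    sent_eq i s hs s' hs' h := ?_
    target_eq q₁ q₂ s hs s' hs' h k := ?_ }, fun _ => rfl, fun _ => rfl, rfl⟩
  · obtain hi | ⟨hlayer, hdet⟩ := hstored i
    · exact hi ▸ h i (self_mem_storageGroup i)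
    · exact congrArg _ (funext (hdet _ (enc_mem _ hs') _ (enc_mem _ hs)
        (fun j hj => hlayer j hj ▸ h j hj) i (self_mem_storageGroup i)))
  · have := hsent q₁ q₂ _ (enc_mem _ hs') _ (enc_mem _ hs) h
    rw [← congrFun (V_enc s hs), ← congrFun (V_enc s' hs')]
    exact htarget _ _ (hsupp _ (enc_mem _ hs) k) (hsupp _ (enc_mem _ hs') k) q₁ q₂
      fun i hi => this i hi k

open Classical in
theorem eventually_exists_blockCode (hα : ∀ i, 0 ≤ α i) (hβ : ∀ i, 0 ≤ β i)
    (hcover : Covers S.p S.X S.V γ) (hsent : ∀ q₁ q₂, Packs S.p S.X (recoverySet q₁ q₂) β γ)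
    (hstored : ∀ i, Packs S.p S.X (storageGroup i) α γ ∨ α i = β i)
    (htarget : ∀ ω ω', S.p ω ≠ 0 → S.p ω' ≠ 0 → ∀ q₁ q₂,
      (∀ i ∈ recoverySet q₁ q₂, S.X i ω = S.X i ω') →
      target (q₁ + q₂) (S.V ω) = target (q₁ + q₂) (S.V ω'))
    {δ ε : ℝ} (hδ : 0 < δ) (hε : 0 < ε) :
    ∀ᶠ n : ℕ in atTop, ∃ B : BlockCode t n, (∀ i, B.storedLen i ≤ n * (α i + δ)) ∧
      (∀ i, B.sentLen i ≤ n * (β i + δ)) ∧ #B.goodᶜ ≤ ε * (2 ^ (2 * t) : ℝ) ^ n := by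
  have hp : S.p ∈ stdSimplex ℝ S.Ω := ⟨S.p_nonneg, S.p_sum⟩
  let sentTasks : Finset (Finset (Fin 5) × Fin 2) :=
    univ.image fun q : Fin 2 × Fin 2 => (recoverySet q.1 q.2, 0)
  let storedTasks : Finset (Finset (Fin 5) × Fin 2) :=
    ({i | Packs S.p S.X (storageGroup i) α γ} : Finset (Fin 5)).image fun i => (storageGroup i, 1)
  have hpack : ∀ R ∈ sentTasks ∪ storedTasks, Packs S.p S.X R.1 (![β, α] R.2) γ := by
    simp only [sentTasks, storedTasks, mem_union, mem_image, mem_filter, mem_univ, true_and]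
    rintro _ (⟨q, rfl⟩ | ⟨i, hi, rfl⟩)
    exacts [hsent q.1 q.2, hi]
  have hρ : ∀ c i, 0 ≤ ![β, α] c i := Fin.forall_fin_two.2 ⟨hβ, hα⟩
  filter_upwards [eventually_exists_binning_code hp hρ hcover hpack hδ hε] with n hn
  obtain ⟨l, b, K, hl, hsupp, hdet, herr⟩ := hn
  let layer i : Fin 2 := if Packs S.p S.X (storageGroup i) α γ then 1 else 0
  have layer_rate i : ![β, α] (layer i) i = α i := by
    by_cases h : Packs S.p S.X (storageGroup i) α γ
    · simp [layer, h]
    · simp [layer, h, (hstored i).resolve_left h]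
  have hdet_stored i : layer i = 0 ∨ (∀ j ∈ storageGroup i, layer j = 1) ∧
      BinsDetermine S.X K (b 1) (storageGroup i) := by
    by_cases h : Packs S.p S.X (storageGroup i) α γ
    · refine .inr ⟨fun j hj => ?_, hdet (storageGroup i, 1) ?_⟩
      · simp [layer, storageGroup_eq_of_mem hj, h]
      · exact mem_union_right _ (mem_image_of_mem _ (by simpa using h))
    · exact .inl (by simp [layer, h])
  obtain ⟨B, hB, hB', hgood⟩ := exists_blockCode_of_binsDetermine hsupp
    (fun q₁ q₂ => hdet _ (mem_union_left _ (mem_image_of_mem _ (mem_univ (q₁, q₂)))))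
    hdet_stored htarget
  refine ⟨B, fun i => ?_, fun i => ?_, ?_⟩
  · simpa only [hB, layer_rate] using hl (layer i) i
  · simpa only [hB', Matrix.cons_val_zero] using hl 0 i
  · simp only [prOf_iid, S.V_unif, prod_const, card_univ, Fintype.card_fin, sum_const,
      nsmul_eq_mul, inv_pow, ← div_eq_mul_inv] at herr
    rwa [hgood, ← div_le_iff₀ (by positivity)]

lemma RinMem.exists_rates {ab : ℝ × ℝ} (h : RinMem t ab) :
    ∃ α β : Fin 5 → ℝ, (∀ i, 0 ≤ α i) ∧ (∀ i, 0 ≤ β i) ∧ ∑ i, α i ≤ 2 * t * ab.1 ∧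
      2 * β 0 + β 1 + β 2 + β 3 + β 4 ≤ 4 * t * ab.2 ∧ ∀ {δ ε : ℝ}, 0 < δ → 0 < ε →
      ∀ᶠ n : ℕ in atTop, ∃ B : BlockCode t n, (∀ i, B.storedLen i ≤ n * (α i + δ)) ∧
        (∀ i, B.sentLen i ≤ n * (β i + δ)) ∧ #B.goodᶜ ≤ ε * (2 ^ (2 * t) : ℝ) ^ n := by
  obtain ⟨S, ⟨f11, f12, f21, f22, decode⟩, β, γ, hβ, α, hα, hX, hX', hY, hY', hstor, hretr⟩ := h
  refine ⟨α, β, fun i => (hα i).1, fun i => (hβ.1 i).1, by rwa [Fin.sum_univ_five], hretr,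
    fun hδ hε => ?_⟩
  have packsX : Packs S.p S.X {0, 1, 2} α γ ∨ α 0 = β 0 ∧ α 1 = β 1 ∧ α 2 = β 2 :=
    (em _).imp (fun h => packs_X_of_RstarMD (hX h)) hX'
  have packsY : Packs S.p S.X {3, 4} α γ ∨ α 3 = β 3 ∧ α 4 = β 4 :=
    (em _).imp (fun h => packs_Y_of_RstarMD (hY h)) hY'
  have hstored i : Packs S.p S.X (storageGroup i) α γ ∨ α i = β i := by
    fin_cases i
    exacts [packsX.imp_right And.left, packsX.imp_right (·.2.1), packsX.imp_right (·.2.2),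
      packsY.imp_right And.left, packsY.imp_right And.right]
  exact eventually_exists_blockCode (fun i => (hα i).1) (fun i => (hβ.1 i).1) hβ.covers
    (fun q₁ q₂ => hβ.packs (recoverySet_mem_recs5 q₁ q₂)) hstored
    (fun ω ω' hω hω' q₁ q₂ => target_eq_of_recoverySet decode hω hω') hδ hε

lemma RinMem.nonneg {ab : ℝ × ℝ} (h : RinMem t ab) (ht : 0 < t) : 0 ≤ ab.1 ∧ 0 ≤ ab.2 := by
  obtain ⟨α, β, hα, hβ, hab, hab', -⟩ := h.exists_rates
  refine ⟨nonneg_of_mul_nonneg_right ((sum_nonneg fun i _ => hα i).trans hab) (by positivity),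
    nonneg_of_mul_nonneg_right (le_trans ?_ hab') (by positivity)⟩
  linarith [hβ 0, hβ 1, hβ 2, hβ 3, hβ 4]

lemma sum_sum_recoverySet_self {M : Type} [AddCommMonoid M] (f : Fin 5 → M) :
    ∑ q, ∑ i ∈ recoverySet q q, f i = f 0 + f 1 + f 3 + (f 0 + f 2 + f 4) := by
  simp [recoverySet, add_assoc]

/-- A database answers query `q` with the labels in `recoverySet q q`, hence the sum over `q`. -/
theorem RinMem.eventually_exists_blockCode {ab : ℝ × ℝ} (h : RinMem t ab) {δ ε : ℝ} (hδ : 0 < δ)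
    (hε : 0 < ε) :
    ∀ᶠ n : ℕ in atTop, ∃ B : BlockCode t n,
      ∑ i, (B.storedLen i : ℝ) ≤ n * (2 * t * ab.1 + δ) ∧
      ∑ q, ∑ i ∈ recoverySet q q, (B.sentLen i : ℝ) ≤ n * (4 * t * ab.2 + δ) ∧
      #B.goodᶜ ≤ ε * (2 ^ (2 * t) : ℝ) ^ n := by
  obtain ⟨α, β, -, -, hα, hβ, hblock⟩ := h.exists_rates
  filter_upwards [hblock (div_pos hδ (by norm_num : (0 : ℝ) < 6)) hε] with n ⟨B, hB, hB', hgood⟩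
  refine ⟨B, ?_, ?_, hgood⟩
  · calc ∑ i, (B.storedLen i : ℝ) ≤ ∑ i, n * (α i + δ / 6) := sum_le_sum fun i _ => hB i
      _ = n * (∑ i, α i + 5 * (δ / 6)) := by simp [← mul_sum, sum_add_distrib]
      _ ≤ n * (2 * t * ab.1 + δ) := by gcongr; linarith
  · calc ∑ q, ∑ i ∈ recoverySet q q, (B.sentLen i : ℝ)
        ≤ ∑ q, ∑ i ∈ recoverySet q q, n * (β i + δ / 6) :=
          sum_le_sum fun q _ => sum_le_sum fun i _ => hB' i
      _ = n * (2 * β 0 + β 1 + β 2 + β 3 + β 4 + δ) := by rw [sum_sum_recoverySet_self]; ring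
      _ ≤ n * (4 * t * ab.2 + δ) := by gcongr

end BlockCode

section Scheme
open Finset

lemma stdP_nonneg (k : Fin 2) (qq : Fin 2 × Fin 2) : 0 ≤ stdP k qq := by
  unfold stdP
  split_ifs <;> norm_num

lemma sum_stdP : ∀ k, ∑ qq, stdP k qq = 1 := by
  norm_num [Fin.forall_fin_two, stdP, Fintype.sum_prod_type]

lemma sum_stdP_eq_query (n q k : Fin 2) :
    (∑ qq : Fin 2 × Fin 2, if (if n = 0 then qq.1 else qq.2) = q then stdP k qq else 0) =
      1 / 2 := by
  fin_cases n <;> fin_cases q <;> fin_cases k <;> simp [stdP, Fintype.sum_prod_type]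

lemma eq_add_of_stdP_ne_zero {k : Fin 2} {qq : Fin 2 × Fin 2} (h : stdP k qq ≠ 0) :
    k = qq.1 + qq.2 := by
  have key : ∀ k q₁ q₂ : Fin 2, k = 0 ∧ q₁ = q₂ ∨ k = 1 ∧ q₁ ≠ q₂ → k = q₁ + q₂ := by decide
  exact key _ _ _ (not_not.1 (mt (if_neg ·) h))

lemma Pe_le_of_forall_retrieved_eq {L : ℕ} {Q : Type} [Fintype Q] [DecidableEq Q]
    (C : CodeBase L Q) (G : Finset (Msg L × Msg L))
    (h : ∀ k qq, C.P k qq ≠ 0 → ∀ w ∈ G, retrieved C k qq w = target k w) :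
    Pe C ≤ #Gᶜ * ((2 : ℝ) ^ (2 * L))⁻¹ := by
  set c : ℝ := (2 ^ (2 * L))⁻¹
  have hc : 0 ≤ c := by positivity
  have error_le (k w) : ∑ qq, c * C.P k qq * (if retrieved C k qq w ≠ target k w then 1 else 0) ≤
      if w ∈ Gᶜ then c else 0 := by
    split_ifs with hw
    · calc _ ≤ ∑ qq, c * C.P k qq := sum_le_sum fun qq _ =>
            mul_le_of_le_one_right (mul_nonneg hc (C.P_nonneg k qq)) (by split_ifs <;> norm_num)
        _ = c := by rw [← mul_sum, C.P_sum, mul_one]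
    · refine (sum_eq_zero fun qq _ => ?_).le
      by_cases hP : C.P k qq = 0
      · simp [hP]
      · simp [h k qq hP w (by simpa using hw)]
  calc Pe C ≤ 1 / 2 * ∑ _k : Fin 2, ∑ w, if w ∈ Gᶜ then c else 0 :=
        mul_le_mul_of_nonneg_left (sum_le_sum fun k _ => sum_le_sum fun w _ => error_le k w)
          (by norm_num)
    _ = #Gᶜ * c := by
        rw [sum_ite_mem, univ_inter, sum_const, sum_const, card_univ, Fintype.card_fin,
          nsmul_eq_mul, nsmul_eq_mul]
        ring

/-- A retrieval scheme with queries in `Fin 2`, whose storage and answers take values in arbitrary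
types and are given as functions of the messages. It works on the messages in `good`. -/
structure Scheme (L : ℕ) (T : Type) (A : Fin 2 → Type) where
  stored : Fin 2 → Msg L × Msg L → T
  sent : Fin 2 → ∀ q, Msg L × Msg L → A q
  good : Finset (Msg L × Msg L)
  sent_eq : ∀ m q, ∀ w ∈ good, ∀ w' ∈ good, stored m w = stored m w' → sent m q w = sent m q w'
  target_eq : ∀ q₁ q₂, ∀ w ∈ good, ∀ w' ∈ good, sent 0 q₁ w = sent 0 q₁ w' →
    sent 1 q₂ w = sent 1 q₂ w' → target (q₁ + q₂) w = target (q₁ + q₂) w'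

namespace Scheme

variable {L m : ℕ} {l : Fin 2 → ℕ} {T : Type} {A : Fin 2 → Type}

/-- The PIR code obtained from a scheme by writing storage and answers in bits. Answers and
decoder are only determined by the scheme on values that occur for good messages, and are
zero elsewhere. -/
noncomputable def toCodeBase (C : Scheme L T A) (eT : T ≃ (Fin m → ZMod 2))
    (eA : ∀ q, A q ≃ (Fin (l q) → ZMod 2)) : CodeBase L (Fin 2) where
  P := stdP
  P_nonneg := stdP_nonneg
  P_sum := sum_stdP
  stor _ := m
  phi n w := eT (C.stored n w)
  blen _ := l
  ans n q := Function.extend (fun w : C.good => eT (C.stored n w)) (fun w => eA q (C.sent n q w)) 0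
  dec k q₁ q₂ a₁ a₂ := Function.extend
    (fun w : C.good => (eA q₁ (C.sent 0 q₁ w), eA q₂ (C.sent 1 q₂ w))) (fun w => target k w) 0
    (a₁, a₂)
  privacy n q s := by rw [sum_stdP_eq_query, sum_stdP_eq_query]

variable (C : Scheme L T A) (eT : T ≃ (Fin m → ZMod 2)) (eA : ∀ q, A q ≃ (Fin (l q) → ZMod 2))

lemma ans_toCodeBase (n q : Fin 2) {w : Msg L × Msg L} (hw : w ∈ C.good) :
    (C.toCodeBase eT eA).ans n q ((C.toCodeBase eT eA).phi n w) = eA q (C.sent n q w) := by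
  have factors : (fun w : C.good => eA q (C.sent n q w)).FactorsThrough
      fun w => eT (C.stored n w) := fun w w' h =>
    congrArg (eA q) (C.sent_eq n q w w.2 w' w'.2 (eT.injective h))
  exact factors.extend_apply 0 ⟨w, hw⟩

lemma retrieved_toCodeBase {k : Fin 2} {qq : Fin 2 × Fin 2} (hk : stdP k qq ≠ 0)
    {w : Msg L × Msg L} (hw : w ∈ C.good) :
    retrieved (C.toCodeBase eT eA) k qq w = target k w := by
  have factors : (fun w : C.good => target k w.1).FactorsThrough
      fun w => (eA qq.1 (C.sent 0 qq.1 w), eA qq.2 (C.sent 1 qq.2 w)) := fun w w' h => by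
    rw [eq_add_of_stdP_ne_zero hk]
    exact C.target_eq _ _ w w.2 w' w'.2 ((eA _).injective (congrArg Prod.fst h))
      ((eA _).injective (congrArg Prod.snd h))
  rw [retrieved, ans_toCodeBase C eT eA 0 qq.1 hw, ans_toCodeBase C eT eA 1 qq.2 hw]
  exact factors.extend_apply 0 ⟨w, hw⟩

lemma Pe_toCodeBase_le : Pe (C.toCodeBase eT eA) ≤ #C.goodᶜ * ((2 : ℝ) ^ (2 * L))⁻¹ :=
  Pe_le_of_forall_retrieved_eq _ _ fun _ _ hk _ hw => C.retrieved_toCodeBase eT eA hk hw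

lemma betaRate_toCodeBase (n : Fin 2) :
    betaRate (C.toCodeBase eT eA) n = (∑ q, (l q : ℝ)) / 2 := by
  unfold betaRate toCodeBase
  fin_cases n <;> simp [stdP, Fintype.sum_prod_type] <;> ring

end Scheme

end Scheme

section Blocks
open Finset Filter

variable {L n t r : ℕ} (e : Fin L ≃ (Fin 2 × Fin n × Fin t) ⊕ Fin r)

/-- The `c`-th of the two blocks of `n` pairs of length-`t` messages into which a pair of messages
is cut, where `e` tells the position of each message symbol. -/
def block (c : Fin 2) (w : Msg L × Msg L) : Fin n → Msg t × Msg t := fun k =>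
  (fun i => w.1 (e.symm (.inl (c, k, i))), fun i => w.2 (e.symm (.inl (c, k, i))))

/-- The symbols of a pair of messages that belong to no block. -/
def rest (w : Msg L × Msg L) : Msg r × Msg r :=
  (fun i => w.1 (e.symm (.inr i)), fun i => w.2 (e.symm (.inr i)))

lemma messageLength_eq (e : Fin L ≃ (Fin 2 × Fin n × Fin t) ⊕ Fin r) : L = 2 * (n * t) + r := by
  simpa using Fintype.card_congr e

lemma add_two_mul_rest_le (e : Fin L ≃ (Fin 2 × Fin n × Fin t) ⊕ Fin r) {a ε x : ℝ}
    (ht : 0 < t) (hr : r ≤ 2 * t) (ha : 0 ≤ a) (hε : 0 ≤ ε) (hLε : 8 * t ≤ L * ε)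
    (hx : x ≤ n * (2 * t * a + ε / 2)) :
    x + 2 * r ≤ L * (a + ε) := by
  have htR : (1 : ℝ) ≤ t := by exact_mod_cast ht
  have hrR : (r : ℝ) ≤ 2 * t := by exact_mod_cast hr
  have hLR : (L : ℝ) = 2 * (n * t) + r := by exact_mod_cast messageLength_eq e
  have hn : 2 * (n : ℝ) ≤ L := by nlinarith [r.cast_nonneg (α := ℝ), n.cast_nonneg (α := ℝ)]
  have block_le : n * (2 * t * a) ≤ L * a := by
    rw [hLR]
    nlinarith [mul_nonneg (r.cast_nonneg (α := ℝ)) ha]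
  nlinarith

variable {e}

lemma target_eq_of_block_of_rest {k : Fin 2} {w w' : Msg L × Msg L}
    (hblock : ∀ c j, target k (block e c w j) = target k (block e c w' j))
    (hrest : rest e w = rest e w') : target k w = target k w' := by
  funext i
  obtain ⟨⟨c, j, i⟩ | i, rfl⟩ := e.symm.surjective i
  · have := congrFun (hblock c j) i
    fin_cases k <;> exact this
  · have := congrArg (fun v => target k v i) hrest
    fin_cases k <;> exact this

lemma eq_of_block_of_rest {w w' : Msg L × Msg L} (hblock : ∀ c, block e c w = block e c w')
    (hrest : rest e w = rest e w') : w = w' := by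
  have h k : target k w = target k w' :=
    target_eq_of_block_of_rest (fun c j => by rw [hblock c]) hrest
  exact Prod.ext (h 0) (h 1)

lemma card_filter_block_notMem_le (G : Finset (Fin n → Msg t × Msg t)) (c : Fin 2) :
    #{w | block e c w ∉ G} ≤ #Gᶜ * ((2 ^ (2 * t)) ^ n * 2 ^ (2 * r)) := by
  have card_le : #{w | block e c w ∉ G} ≤
      #(Gᶜ ×ˢ (univ : Finset ((Fin n → Msg t × Msg t) × (Msg r × Msg r)))) := by
    refine card_le_card_of_injOn (fun w => (block e c w, block e (c + 1) w, rest e w))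
      (fun w hw => by simpa using hw) fun w _ w' _ h => ?_
    simp only [Prod.mk.injEq] at h
    refine eq_of_block_of_rest (fun d => ?_) h.2.2
    have eq_or_eq_add_one : ∀ c d : Fin 2, d = c ∨ d = c + 1 := by decide
    obtain rfl | rfl := eq_or_eq_add_one c d
    exacts [h.1, h.2.1]
  refine card_le.trans_eq ?_
  simp only [card_product, card_univ, Fintype.card_pi, Fintype.card_prod, ZMod.card, prod_const,
    Fintype.card_fin, two_mul, pow_add]

/-- Label `i` of block `m + labelShift i` is stored at database `m`. Each database stores the
labels `X₀, X₁, X₂` of one block and `Y₁, Y₂` of the other one, so that both databases have the same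
rates. -/
def labelShift : Fin 5 → Fin 2 := ![0, 0, 0, 1, 1]

lemma labelShift_eq_of_mem_storageGroup :
    ∀ {i j}, j ∈ storageGroup i → labelShift j = labelShift i := by decide

lemma mem_recoverySet_self_of_mem : ∀ {c : Fin 2} {q : Fin 2 → Fin 2} {i : Fin 5},
    i ∈ recoverySet (q c) (q (c + 1)) →
      i ∈ recoverySet (q (c + labelShift i)) (q (c + labelShift i)) := by
  decide

namespace BlockCode

variable (B : BlockCode t n)

/-- The retrieval scheme that applies a block code to both blocks of the messages. Database `m`
answers query `q` with those stored labels that belong to `recoverySet q q`, and stores and sends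
the symbols outside the blocks in the clear. -/
def toScheme (e : Fin L ≃ (Fin 2 × Fin n × Fin t) ⊕ Fin r) :
    Scheme L ((∀ i, Fin (B.storedLen i) → ZMod 2) × (Msg r × Msg r))
      fun q => (∀ i : recoverySet q q, Fin (B.sentLen i) → ZMod 2) × (Msg r × Msg r) where
  stored m w := (fun i => B.stored i (block e (m + labelShift i) w), rest e w)
  sent m _ w := (fun i => B.sent i (block e (m + labelShift i) w), rest e w)
  good := {w | ∀ c, block e c w ∈ B.good}
  sent_eq m q w hw w' hw' h := by
    simp only [mem_filter, mem_univ, true_and] at hw hw'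
    refine Prod.ext (funext fun i => ?_) (congrArg Prod.snd h :)
    refine B.sent_eq i _ (hw _) _ (hw' _) fun j hj => ?_
    rw [← labelShift_eq_of_mem_storageGroup hj]
    exact congrFun (congrArg Prod.fst h) j
  target_eq q₁ q₂ w hw w' hw' h₁ h₂ := by
    simp only [mem_filter, mem_univ, true_and] at hw hw'
    let q : Fin 2 → Fin 2 := ![q₁, q₂]
    have sent_eq : ∀ m, ∀ i ∈ recoverySet (q m) (q m),
        B.sent i (block e (m + labelShift i) w) = B.sent i (block e (m + labelShift i) w') :=
      Fin.forall_fin_two.2 ⟨fun i hi => congrFun (congrArg Prod.fst h₁) ⟨i, hi⟩,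
        fun i hi => congrFun (congrArg Prod.fst h₂) ⟨i, hi⟩⟩
    refine target_eq_of_block_of_rest (fun c => ?_) (congrArg Prod.snd h₁)
    have sum_query : q c + q (c + 1) = q₁ + q₂ := by
      fin_cases c
      exacts [rfl, add_comm q₂ q₁]
    rw [← sum_query]
    refine B.target_eq _ _ _ (hw c) _ (hw' c) fun i hi => ?_
    have shift_shift : ∀ c d : Fin 2, c + d + d = c := by decide
    simpa only [shift_shift] using sent_eq _ i (mem_recoverySet_self_of_mem hi)

/-- The number of bits a database stores when the block code is applied to both blocks and `r`
symbols of each message are left over. -/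
def storLen (r : ℕ) : ℕ := ∑ i, B.storedLen i + 2 * r

/-- The number of bits of an answer to the query `q`; compare `storLen`. -/
def ansLen (r : ℕ) (q : Fin 2) : ℕ := ∑ i ∈ recoverySet q q, B.sentLen i + 2 * r

/-- The PIR code that applies a block code to both blocks of the messages. -/
noncomputable def toCodeBase (e : Fin L ≃ (Fin 2 × Fin n × Fin t) ⊕ Fin r) : CodeBase L (Fin 2) :=
  (B.toScheme e).toCodeBase (m := B.storLen r) (l := B.ansLen r)
    (Fintype.equivOfCardEq (by
      simp [storLen, ZMod.card, prod_pow_eq_pow_sum, pow_add, two_mul]))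
    fun q => Fintype.equivOfCardEq (by
      simp [ansLen, ZMod.card, prod_pow_eq_pow_sum, pow_add, two_mul,
        sum_attach _ B.sentLen])

variable {B} {e : Fin L ≃ (Fin 2 × Fin n × Fin t) ⊕ Fin r}

lemma card_compl_good_toScheme_le {ε : ℝ} (h : #B.goodᶜ ≤ ε * (2 ^ (2 * t) : ℝ) ^ n) :
    #(B.toScheme e).goodᶜ ≤ 2 * ε * (2 : ℝ) ^ (2 * L) := by
  have compl_good : (B.toScheme e).goodᶜ = univ.biUnion fun c => {w | block e c w ∉ B.good} := by
    ext w
    simp [toScheme, -Fin.exists_fin_two, -Fin.forall_fin_two]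
  have card_le : #(B.toScheme e).goodᶜ ≤ 2 * (#B.goodᶜ * ((2 ^ (2 * t)) ^ n * 2 ^ (2 * r))) := by
    rw [compl_good]
    exact card_biUnion_le_card_mul _ _ _ fun c _ => card_filter_block_notMem_le B.good c
  calc (#(B.toScheme e).goodᶜ : ℝ)
      ≤ 2 * (#B.goodᶜ * ((2 ^ (2 * t)) ^ n * 2 ^ (2 * r))) := by exact_mod_cast card_le
    _ ≤ 2 * (ε * (2 ^ (2 * t)) ^ n * ((2 ^ (2 * t)) ^ n * 2 ^ (2 * r))) := by gcongr
    _ = 2 * ε * 2 ^ (2 * L) := by rw [messageLength_eq e]; ring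

lemma Pe_toCodeBase_le {ε : ℝ} (h : #B.goodᶜ ≤ ε * (2 ^ (2 * t) : ℝ) ^ n) :
    Pe (B.toCodeBase e) ≤ 2 * ε := by
  refine (Scheme.Pe_toCodeBase_le _ _ _).trans ?_
  rw [← div_eq_mul_inv, div_le_iff₀ (by positivity)]
  exact card_compl_good_toScheme_le h

variable {ab : ℝ × ℝ} {ε : ℝ}

lemma stor_toCodeBase_le (ht : 0 < t) (hr : r ≤ 2 * t) (hab : 0 ≤ ab.1) (hε : 0 ≤ ε)
    (hLε : 8 * t ≤ L * ε) (h : ∑ i, (B.storedLen i : ℝ) ≤ n * (2 * t * ab.1 + ε / 2)) (m : Fin 2) :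
    (B.toCodeBase e).stor m ≤ L * (ab.1 + ε) := by
  simpa [toCodeBase, Scheme.toCodeBase, storLen] using
    add_two_mul_rest_le e ht hr hab hε hLε h

lemma betaRate_toCodeBase_le (ht : 0 < t) (hr : r ≤ 2 * t) (hab : 0 ≤ ab.2) (hε : 0 ≤ ε)
    (hLε : 8 * t ≤ L * ε)
    (h : ∑ q, ∑ i ∈ recoverySet q q, (B.sentLen i : ℝ) ≤ n * (4 * t * ab.2 + ε / 2)) (m : Fin 2) :
    betaRate (B.toCodeBase e) m ≤ L * (ab.2 + ε) := by
  have := add_two_mul_rest_le e ht hr hab hε hLε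
    (x := (∑ q, ∑ i ∈ recoverySet q q, (B.sentLen i : ℝ)) / 2)
    (by linarith [mul_nonneg n.cast_nonneg hε])
  refine le_of_eq_of_le ?_ this
  rw [toCodeBase, Scheme.betaRate_toCodeBase, Fin.sum_univ_two, Fin.sum_univ_two, ansLen, ansLen]
  push_cast
  ring

end BlockCode

end Blocks

/-- For every integer `t ≥ 1`, every `(ᾱ, β̄) ∈ R^{(t)}_in`, and every
`ε > 0`, for all sufficiently large `L` there exists an
`(L, L(ᾱ+ε), L(ᾱ+ε), L(β̄+ε), L(β̄+ε))` ε-error (2,2) PIR code whose query distribution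
for message 1 is uniform on `{(1,1),(2,2)}` and for message 2 is uniform on
`{(1,2),(2,1)}`. -/
theorem statement3 (t : ℕ) (ht : 1 ≤ t) (ab : ℝ × ℝ) (hab : RinMem t ab)
    (ε : ℝ) (hε : 0 < ε) :
    ∃ L₀ : ℕ, ∀ L ≥ L₀, ∃ C : CodeBase L (Fin 2),
      C.P = stdP ∧
      Pe C ≤ ε ∧
      (C.stor 0 : ℝ) ≤ L * (ab.1 + ε) ∧ (C.stor 1 : ℝ) ≤ L * (ab.1 + ε) ∧
      betaRate C 0 ≤ L * (ab.2 + ε) ∧ betaRate C 1 ≤ L * (ab.2 + ε) := by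
  obtain ⟨hab₁, hab₂⟩ := hab.nonneg ht
  have ht2 : 0 < 2 * t := by positivity
  have exists_block := (Nat.tendsto_div_const_atTop ht2.ne').eventually
    (hab.eventually_exists_blockCode (half_pos hε) (half_pos hε))
  have le_mul := (tendsto_natCast_atTop_atTop.atTop_mul_const hε).eventually_ge_atTop (8 * t : ℝ)
  refine Filter.eventually_atTop.1 ?_
  filter_upwards [exists_block, le_mul] with L ⟨B, hstored, hsent, hgood⟩ hL
  have r_le : L % (2 * t) ≤ 2 * t := (L.mod_lt ht2).le
  let e : Fin L ≃ (Fin 2 × Fin (L / (2 * t)) × Fin t) ⊕ Fin (L % (2 * t)) :=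
    Fintype.equivOfCardEq <| by
      simpa [mul_left_comm, mul_assoc, mul_comm] using (L.div_add_mod (2 * t)).symm
  have stor_le := BlockCode.stor_toCodeBase_le (e := e) ht r_le hab₁ hε.le hL hstored
  have rate_le := BlockCode.betaRate_toCodeBase_le (e := e) ht r_le hab₂ hε.le hL hsent
  have Pe_le := BlockCode.Pe_toCodeBase_le (e := e) hgood
  rw [mul_div_cancel₀ ε two_ne_zero] at Pe_le
  exact ⟨B.toCodeBase e, rfl, Pe_le, stor_le 0, stor_le 1, rate_le 0, rate_le 1⟩

end PIR
end

section
/- Every pair (ᾱ, β̄) in the achievable storage-retrieval rate region R of the (2,2) PIR problem satisfies β̄ ≥ 3/4. -/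
open scoped BigOperators

namespace PIR

variable {L : ℕ} {Q : Type} [Fintype Q] [DecidableEq Q]

/-!
Measure uncertainty by the Hartley entropy, the logarithm of the number of possible values, and
write `H(A | W₁)` for its average over the first message. When the second message is desired, the
two answers determine it once `W₁` is known, so `L ≤ H(A₁ | W₁) + H(A₂ | W₁)`. When the first
message is desired, each `W₁` gives its own set of answer pairs and these sets are disjoint, so
Jensen's inequality gives `L + H(A₁, A₂ | W₁) ≤ β₁ + β₂`, where `H(A₁, A₂ | W₁)` is at least the
mean of `H(A₁ | W₁)` and `H(A₂ | W₁)`. By privacy the averages of these two terms over the queries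
do not depend on the desired message, so the bounds combine to `L + L / 2 ≤ β₁ + β₂`.
-/

open Finset

section Jensen

lemma expect_le_map_expect_of_concaveOn {ι 𝕜 : Type*} [Field 𝕜] [LinearOrder 𝕜]
    [IsStrictOrderedRing 𝕜] {s : Set 𝕜} {f : 𝕜 → 𝕜} (hf : ConcaveOn 𝕜 s f) {t : Finset ι}
    (ht : t.Nonempty) {p : ι → 𝕜} (hp : ∀ i ∈ t, p i ∈ s) :
    𝔼 i ∈ t, f (p i) ≤ f (𝔼 i ∈ t, p i) := by
  have hcard : (#t : 𝕜) ≠ 0 := by exact_mod_cast ht.card_ne_zero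
  have hsum : ∑ _i ∈ t, (#t : 𝕜)⁻¹ = 1 := by
    rw [sum_const, nsmul_eq_mul, mul_inv_cancel₀ hcard]
  have hjensen := hf.le_map_sum (fun _ _ => by positivity) hsum hp
  simpa only [expect_eq_sum_div_card, div_eq_inv_mul, mul_sum, smul_eq_mul] using hjensen

lemma concaveOn_logb_Ioi {b : ℝ} (hb : 1 ≤ b) : ConcaveOn ℝ (Set.Ioi 0) (Real.logb b) := by
  have hlogb : Real.logb b = fun x => (Real.log b)⁻¹ • Real.log x :=
    funext fun _ => div_eq_inv_mul _ _
  exact hlogb ▸ strictConcaveOn_log_Ioi.concaveOn.smul (inv_nonneg.2 (Real.log_nonneg hb))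

end Jensen

section CondHartley

lemma card_le_card_image_mul_card_image {β γ δ : Type*} [DecidableEq γ] [DecidableEq δ]
    {s : Finset β} {f : β → γ} {g : β → δ} (h : Set.InjOn (fun b => (f b, g b)) s) :
    #s ≤ #(s.image f) * #(s.image g) := by
  rw [← card_product]
  exact card_le_card_of_injOn _
    (fun b hb => mem_product.2 ⟨mem_image_of_mem f hb, mem_image_of_mem g hb⟩) h

variable {α β γ δ : Type*} [Fintype α] [Fintype β] [DecidableEq γ] [DecidableEq δ]

lemma sum_card_image_le_card [Fintype γ] {f : α → β → γ} {d : γ → α}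
    (hd : ∀ a b, d (f a b) = a) : ∑ a, #(univ.image (f a)) ≤ Fintype.card γ := by
  classical
  rw [← card_univ, card_eq_sum_card_fiberwise fun c _ => mem_univ (d c)]
  gcongr with a
  intro c hc
  obtain ⟨b, -, rfl⟩ := mem_image.1 hc
  simp only [mem_filter_univ, hd]

/-- The conditional Hartley entropy, in bits, of `f (a, b)` given `a`: the binary logarithm of the
number of values of `f (a, ·)`, averaged over `a`. It plays the role of the Shannon entropy
`H(f(A, B) | A)` for uniform `A`. -/
noncomputable def condHartley (f : α × β → γ) : ℝ :=
  𝔼 a, Real.logb 2 #(univ.image fun b => f (a, b))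

section Nonempty

variable [Nonempty β]

lemma card_image_univ_pos (f : β → γ) : (0 : ℝ) < #(univ.image f) :=
  Nat.cast_pos.2 (univ_nonempty.image f).card_pos

lemma condHartley_comp_le (g : γ → δ) (f : α × β → γ) : condHartley (g ∘ f) ≤ condHartley f := by
  refine expect_le_expect fun a _ => Real.logb_le_logb_of_le one_lt_two (card_image_univ_pos _) ?_
  have himage : (univ.image fun b => f (a, b)).image g = univ.image fun b => (g ∘ f) (a, b) :=
    image_image
  rw [← himage]
  exact_mod_cast card_image_le

lemma condHartley_add_div_two_le_condHartley_prodMk (f : α × β → γ) (g : α × β → δ) :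
    (condHartley f + condHartley g) / 2 ≤ condHartley fun x => (f x, g x) := by
  have hf := condHartley_comp_le Prod.fst fun x => (f x, g x)
  have hg := condHartley_comp_le Prod.snd fun x => (f x, g x)
  simp only [Function.comp_def] at hf hg
  linarith

variable [Nonempty α]

lemma logb_card_le_condHartley_add {f : α × β → γ} {g : α × β → δ}
    (h : ∀ a, Function.Injective fun b => (f (a, b), g (a, b))) :
    Real.logb 2 (Fintype.card β) ≤ condHartley f + condHartley g := by
  rw [condHartley, condHartley, ← expect_add_distrib]
  refine le_expect univ_nonempty fun a _ => ?_
  rw [← Real.logb_mul (card_image_univ_pos _).ne' (card_image_univ_pos _).ne']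
  refine Real.logb_le_logb_of_le one_lt_two (Nat.cast_pos.2 Fintype.card_pos) ?_
  exact_mod_cast card_le_card_image_mul_card_image (h a).injOn

lemma logb_card_add_condHartley_le_logb_card [Fintype γ] {f : α × β → γ} {d : γ → α}
    (hd : ∀ x, d (f x) = x.1) :
    Real.logb 2 (Fintype.card α) + condHartley f ≤ Real.logb 2 (Fintype.card γ) := by
  let N (a : α) : ℝ := #(univ.image fun b => f (a, b))
  have hN (a : α) : 0 < N a := card_image_univ_pos _
  have hmean : 0 < 𝔼 a, N a := expect_pos (fun a _ => hN a) univ_nonempty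
  have hcard : (0 : ℝ) < Fintype.card α := Nat.cast_pos.2 Fintype.card_pos
  have hsum : Fintype.card α * 𝔼 a, N a ≤ Fintype.card γ := by
    simp only [Fintype.card_mul_expect, N]
    exact_mod_cast sum_card_image_le_card fun a b => hd (a, b)
  have hjensen : condHartley f ≤ Real.logb 2 (𝔼 a, N a) :=
    expect_le_map_expect_of_concaveOn (concaveOn_logb_Ioi one_le_two) univ_nonempty fun a _ => hN a
  calc Real.logb 2 (Fintype.card α) + condHartley f
      ≤ Real.logb 2 (Fintype.card α) + Real.logb 2 (𝔼 a, N a) := by gcongr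
    _ = Real.logb 2 (Fintype.card α * 𝔼 a, N a) := (Real.logb_mul hcard.ne' hmean.ne').symm
    _ ≤ Real.logb 2 (Fintype.card γ) :=
        Real.logb_le_logb_of_le one_lt_two (mul_pos hcard hmean) hsum

end Nonempty

end CondHartley

lemma logb_two_card_fin_fun_zmod_two (m : ℕ) :
    Real.logb 2 (Fintype.card (Fin m → ZMod 2)) = m := by
  simp [ZMod.card, Real.logb_pow]

namespace CodeBase

variable (C : CodeBase L Q)

/-- The expectation of `g (Q₁, Q₂)` over the queries made when message `k` is desired. -/
noncomputable def queryMean (k : Fin 2) (g : Q × Q → ℝ) : ℝ := ∑ qq, C.P k qq * g qq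

/-- The probability that database `n` receives the query `q` when message `k` is desired. -/
noncomputable def queryMarginal (k n : Fin 2) (q : Q) : ℝ :=
  ∑ qq : Q × Q, if (if n = 0 then qq.1 else qq.2) = q then C.P k qq else 0

/-- The answer of database `n` to the query `q`, as a function of the two messages. -/
def answer (n : Fin 2) (q : Q) (w : Msg L × Msg L) : Fin (C.blen n q) → ZMod 2 :=
  C.ans n q (C.phi n w)

/-- `H(Aₙ | W₁)` in the sense of `condHartley`, for the answer `Aₙ` of database `n` to the
query `q`. -/
noncomputable def answerEntropy (n : Fin 2) (q : Q) : ℝ := condHartley (C.answer n q)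

section QueryMean

variable (k : Fin 2)

lemma queryMean_const (c : ℝ) : C.queryMean k (fun _ => c) = c := by
  rw [queryMean, ← sum_mul, C.P_sum, one_mul]

lemma queryMean_add (f g : Q × Q → ℝ) :
    C.queryMean k (fun qq => f qq + g qq) = C.queryMean k f + C.queryMean k g := by
  simp only [queryMean, mul_add, sum_add_distrib]

lemma queryMean_div (f : Q × Q → ℝ) (c : ℝ) :
    C.queryMean k (fun qq => f qq / c) = C.queryMean k f / c := by
  simp only [queryMean, mul_div_assoc, sum_div]

variable {C k} in
lemma queryMean_le_queryMean {f g : Q × Q → ℝ} (h : ∀ qq, C.P k qq ≠ 0 → f qq ≤ g qq) :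
    C.queryMean k f ≤ C.queryMean k g := by
  refine sum_le_sum fun qq _ => ?_
  rcases eq_or_ne (C.P k qq) 0 with hq | hq
  · simp only [hq, zero_mul, le_refl]
  · exact mul_le_mul_of_nonneg_left (h qq hq) (C.P_nonneg k qq)

lemma queryMean_eq_sum_queryMarginal_mul (n : Fin 2) (g : Q → ℝ) :
    C.queryMean k (fun qq => g (if n = 0 then qq.1 else qq.2)) =
      ∑ q, C.queryMarginal k n q * g q := by
  simp only [queryMean, queryMarginal, sum_mul, ite_mul, zero_mul]
  rw [sum_comm]
  simp only [sum_ite_eq, mem_univ, if_true]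

end QueryMean

lemma queryMarginal_zero_eq_one (n : Fin 2) (q : Q) :
    C.queryMarginal 0 n q = C.queryMarginal 1 n q := by
  -- Privacy is stated for the pair `(Qₙ, Sₙ)`; cancel the probability of an attained `Sₙ`.
  have hne : #{w | C.phi n w = C.phi n 0} ≠ 0 := card_ne_zero_of_mem (mem_filter_univ 0 |>.2 rfl)
  exact mul_right_cancel₀ (Nat.cast_ne_zero.2 hne) (C.privacy n q (C.phi n 0))

lemma queryMean_marginal_zero_eq_one (n : Fin 2) (g : Q → ℝ) :
    C.queryMean 0 (fun qq => g (if n = 0 then qq.1 else qq.2)) =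
      C.queryMean 1 (fun qq => g (if n = 0 then qq.1 else qq.2)) := by
  simp only [queryMean_eq_sum_queryMarginal_mul, queryMarginal_zero_eq_one]

lemma queryMean_answerEntropy_add_zero_eq_one :
    C.queryMean 0 (fun qq => C.answerEntropy 0 qq.1 + C.answerEntropy 1 qq.2) =
      C.queryMean 1 (fun qq => C.answerEntropy 0 qq.1 + C.answerEntropy 1 qq.2) := by
  rw [queryMean_add, queryMean_add]
  exact congrArg₂ (· + ·) (C.queryMean_marginal_zero_eq_one 0 _)
    (C.queryMean_marginal_zero_eq_one 1 _)

lemma betaRate_add_eq_queryMean : betaRate C 0 + betaRate C 1 =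
    C.queryMean 0 fun qq => (C.blen 0 qq.1 : ℝ) + C.blen 1 qq.2 :=
  (C.queryMean_add 0 _ _).symm

variable {C}

lemma length_le_answerEntropy_add (hz : IsZeroError C) {qq : Q × Q} (hq : C.P 1 qq ≠ 0) :
    (L : ℝ) ≤ C.answerEntropy 0 qq.1 + C.answerEntropy 1 qq.2 := by
  have hinj (a : Msg L) :
      Function.Injective fun b => (C.answer 0 qq.1 (a, b), C.answer 1 qq.2 (a, b)) :=
    Function.LeftInverse.injective (g := Function.uncurry (C.dec 1 qq.1 qq.2))
      fun b => hz 1 (a, b) qq hq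
  calc (L : ℝ) = Real.logb 2 (Fintype.card (Msg L)) := (logb_two_card_fin_fun_zmod_two L).symm
    _ ≤ C.answerEntropy 0 qq.1 + C.answerEntropy 1 qq.2 := logb_card_le_condHartley_add hinj

lemma length_add_answerEntropy_le_blen_add (hz : IsZeroError C) {qq : Q × Q} (hq : C.P 0 qq ≠ 0) :
    L + (C.answerEntropy 0 qq.1 + C.answerEntropy 1 qq.2) / 2 ≤
      (C.blen 0 qq.1 : ℝ) + C.blen 1 qq.2 := by
  have hjoint := logb_card_add_condHartley_le_logb_card
    (f := fun w => (C.answer 0 qq.1 w, C.answer 1 qq.2 w))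
    (d := Function.uncurry (C.dec 0 qq.1 qq.2)) fun w => hz 0 w qq hq
  have hmean := condHartley_add_div_two_le_condHartley_prodMk (C.answer 0 qq.1) (C.answer 1 qq.2)
  rw [Fintype.card_prod, Nat.cast_mul, Real.logb_mul (by positivity) (by positivity)] at hjoint
  simp only [logb_two_card_fin_fun_zmod_two] at hjoint
  exact (add_le_add_right hmean _).trans hjoint

variable (C) in
theorem three_halves_mul_le_betaRate_add (hz : IsZeroError C) :
    3 / 2 * (L : ℝ) ≤ betaRate C 0 + betaRate C 1 := by
  let H (qq : Q × Q) : ℝ := C.answerEntropy 0 qq.1 + C.answerEntropy 1 qq.2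
  have hH : L ≤ C.queryMean 0 H :=
    calc (L : ℝ) = C.queryMean 1 fun _ => (L : ℝ) := (C.queryMean_const 1 _).symm
      _ ≤ C.queryMean 1 H := queryMean_le_queryMean fun _ => length_le_answerEntropy_add hz
      _ = C.queryMean 0 H := C.queryMean_answerEntropy_add_zero_eq_one.symm
  calc 3 / 2 * (L : ℝ) ≤ L + C.queryMean 0 H / 2 := by linarith
    _ = C.queryMean 0 fun qq => L + H qq / 2 := by
        rw [C.queryMean_add 0 (fun _ => L), queryMean_const, queryMean_div]
    _ ≤ C.queryMean 0 fun qq => (C.blen 0 qq.1 : ℝ) + C.blen 1 qq.2 :=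
        queryMean_le_queryMean fun _ => length_add_answerEntropy_le_blen_add hz
    _ = betaRate C 0 + betaRate C 1 := C.betaRate_add_eq_queryMean.symm

end CodeBase

/-- Every pair `(ᾱ, β̄)` in the achievable storage-retrieval rate region
of the (2,2) PIR problem satisfies `β̄ ≥ 3/4`. -/
theorem statement4 (ab : ℝ × ℝ) (h : ab ∈ Region) : 3 / 4 ≤ ab.2 := by
  refine le_of_forall_pos_le_add fun ε hε => ?_
  obtain ⟨L₀, hL₀⟩ := h ε hε
  obtain ⟨C, hz, -, hrate⟩ := hL₀ (L₀ + 1) L₀.le_succ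
  have hconv := C.base.three_halves_mul_le_betaRate_add hz
  have hpos : (0 : ℝ) < (L₀ + 1 : ℕ) := by positivity
  refine le_of_mul_le_mul_left ?_ hpos
  linarith

end PIR
end
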